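/- arXiv:0812.1139 — 3 statements merged into one kernel-verified Lean document; each statement's English description precedes it below -/
import Mathlib

section
/- Let p be an odd prime and q a positive integer dividing p − 1, and let G = Z/p ⋊ Z/q be a semidirect product in which the action of Z/q on the normal subgroup Z/p is effective. Then: (a) G admits an injective homomorphism into SO(2q, R); (b) if q is even, G admits an injective homomorphism into SO(q+1, R); (c) if q is even, G admits an injective homomorphism into O(q, R) whose image contains a matrix of determinant −1. -/
/-!
A faithful unitary character `χ` of `A` induces a unitary representation of `A ⋊ B` on `ℂ[B]`: the
normal subgroup acts by the diagonal matrices `diag (χ (x⁻¹ • a))` and `B` by left translations.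
It is faithful because it is faithful on `A`, which is its own centralizer.

A unitary representation `f` whose complex conjugate is `P f P⁻¹`, with `P` the matrix of an
involutive permutation, is conjugate to an orthogonal one: a unitary `U` with `conj U = P U` makes
`U⁻¹ f U` real. This applies to `f ⊕ conj f`, where `P` swaps the summands, and gives (a). If some
`t` in `B` acts on `A` by inversion, it applies to `f` itself, where `P` is right translation by
`t`, and gives (c), the left translation by a generator of `B` being an odd permutation; adding the
determinant of this representation as a summand gives (b). An involution of `ℤ/p` other than the
identity is the inversion, so that `t` exists when `q` is even.
-/

section Groups

theorem mulAut_apply_eq_inv_of_mul_self_eq_one {A : Type*} [CommGroup A] [IsSimpleGroup A]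
    {α : MulAut A} (hα : α * α = 1) (hα_ne : α ≠ 1) (a : A) : α a = a⁻¹ := by
  let fixed : Subgroup A := α.toMonoidHom.eqLocus (MonoidHom.id A)
  have hmem : α a * a ∈ fixed := by
    change α (α a * a) = α a * a
    rw [map_mul, ← MulAut.mul_apply, hα, MulAut.one_apply, mul_comm]
  rcases fixed.normal_of_isMulCommutative.eq_bot_or_eq_top with hbot | htop
  · exact eq_inv_of_mul_eq_one_left (Subgroup.mem_bot.mp (hbot ▸ hmem))
  · have hfix (b : A) : b ∈ fixed := htop ▸ Subgroup.mem_top b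
    exact absurd (MulEquiv.ext hfix) hα_ne

theorem exists_apply_eq_inv_of_even_card {A B : Type*} [CommGroup A] [IsSimpleGroup A] [Group B]
    [Finite B] {φ : B →* MulAut A} (hφ : Function.Injective φ) (hB : Even (Nat.card B)) :
    ∃ t, ∀ a, φ t a = a⁻¹ := by
  obtain ⟨t, ht⟩ := exists_prime_orderOf_dvd_card' 2 hB.two_dvd
  obtain ⟨ht_sq, ht_ne⟩ := orderOf_eq_prime_iff.mp ht
  exact ⟨t, mulAut_apply_eq_inv_of_mul_self_eq_one (by rw [← map_mul, ← pow_two, ht_sq, map_one])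
    ((map_ne_one_iff φ hφ).mpr ht_ne)⟩

theorem injective_of_injective_comp_inl {A B H : Type*} [CommGroup A] [Group B] [Group H]
    {φ : B →* MulAut A} (hφ : Function.Injective φ) {F : A ⋊[φ] B →* H}
    (hF : Function.Injective (F.comp SemidirectProduct.inl)) : Function.Injective F := by
  rw [injective_iff_map_eq_one]
  intro g hg
  have hright : g.right = 1 := by
    refine hφ ((MulEquiv.ext fun a => hF ?_).trans (map_one φ).symm)
    have hconj : g * SemidirectProduct.inl a * g⁻¹ = SemidirectProduct.inl (φ g.right a) := by
      ext <;> simp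
    simpa [hg] using (congrArg F hconj).symm
  have hinl : SemidirectProduct.inl g.left = g := by ext <;> simp [hright]
  have hleft : g.left = 1 := hF (by simpa [hinl] using hg)
  rw [← hinl, hleft, map_one]

theorem sign_toPermHom_of_forall_mem_zpowers {B : Type*} [Group B] [Fintype B] [DecidableEq B]
    [Nontrivial B] {b : B} (hb : ∀ x, x ∈ Subgroup.zpowers b) :
    Equiv.Perm.sign (MulAction.toPermHom B B b) = -(-1) ^ Fintype.card B := by
  have hb_ne : b ≠ 1 := by
    rintro rfl
    obtain ⟨x, hx⟩ := exists_ne (1 : B)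
    exact hx (by simpa using hb x)
  have hmove (x : B) : MulAction.toPermHom B B b x ≠ x := by simpa using hb_ne
  have hcycle : (MulAction.toPermHom B B b).IsCycle := by
    refine ⟨1, hmove 1, fun x _ => ?_⟩
    obtain ⟨k, rfl⟩ := Subgroup.mem_zpowers_iff.mp (hb x)
    exact ⟨k, by rw [← map_zpow]; simp⟩
  have hsupport : (MulAction.toPermHom B B b).support = Finset.univ := by
    simpa [Finset.eq_univ_iff_forall] using hb_ne
  rw [hcycle.sign, hsupport, Finset.card_univ]

end Groups

section Unitary

variable {R S X Y : Type*} [CommRing R] [StarRing R] [CommRing S] [StarRing S]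
  [Fintype X] [DecidableEq X] [Fintype Y] [DecidableEq Y]

/-- The homomorphism between unitary groups which applies a `star`-preserving ring homomorphism to
every entry. -/
def unitaryGroupMap (r : R →+* S) (hr : Function.Semiconj r star star) :
    Matrix.unitaryGroup X R →* Matrix.unitaryGroup X S :=
  (Unitary.map (⟨(r.mapMatrix : Matrix X X R →+* Matrix X X S),
    fun _ => Matrix.conjTranspose_map r hr⟩ : Matrix X X R →⋆* Matrix X X S)).toMonoidHom

theorem mem_unitaryGroup_of_map_mem {r : R →+* S} (hr : Function.Semiconj r star star)
    (hinj : Function.Injective r) {M : Matrix X X R} (hM : M.map r ∈ Matrix.unitaryGroup X S) :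
    M ∈ Matrix.unitaryGroup X R := by
  rw [Matrix.mem_unitaryGroup_iff] at hM ⊢
  apply Matrix.map_injective hinj
  change (M * M.conjTranspose).map r = (1 : Matrix X X R).map r
  rw [Matrix.map_mul, Matrix.conjTranspose_map r hr, Matrix.map_one r r.map_zero r.map_one]
  exact hM

/-- Relabelling of the rows and columns of unitary matrices along a bijection of index sets. -/
def unitaryGroupReindex (e : X ≃ Y) : Matrix.unitaryGroup X R →* Matrix.unitaryGroup Y R :=
  (Unitary.map (⟨(Matrix.reindexAlgEquiv R R e : Matrix X X R →* Matrix Y Y R),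
    fun M => (Matrix.conjTranspose_reindex e e M).symm⟩ :
      Matrix X X R →⋆* Matrix Y Y R)).toMonoidHom

theorem unitaryGroupReindex_injective (e : X ≃ Y) :
    Function.Injective (unitaryGroupReindex (R := R) e) := fun _ _ h =>
  Subtype.ext ((Matrix.reindex e e).injective (congrArg Subtype.val h))

theorem det_unitaryGroupReindex (e : X ≃ Y) (M : Matrix.unitaryGroup X R) :
    (unitaryGroupReindex e M : Matrix Y Y R).det = (M : Matrix X X R).det :=
  Matrix.det_reindex_self e M.1

/-- Permutation matrices as unitary matrices. The value at `σ` is `permMatrix σ⁻¹`, as `permMatrix`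
is antimultiplicative. -/
def unitaryGroupPerm : Equiv.Perm X →* Matrix.unitaryGroup X R :=
  Matrix.permMatrixHom.codRestrict _ fun σ => by
    rw [Matrix.mem_unitaryGroup_iff, Matrix.star_eq_conjTranspose, Matrix.permMatrixHom_apply,
      Matrix.conjTranspose_permMatrix, ← Matrix.permMatrix_mul, inv_inv, mul_inv_cancel,
      Matrix.permMatrix_one]

theorem det_unitaryGroupPerm (σ : Equiv.Perm X) :
    ((unitaryGroupPerm σ : Matrix.unitaryGroup X R) : Matrix X X R).det =
      ((Equiv.Perm.sign σ : ℤ) : R) := by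
  change ((σ⁻¹).permMatrix R).det = _
  rw [Matrix.det_permutation, Equiv.Perm.sign_inv]

/-- Diagonal matrices with unitary entries. -/
def unitaryGroupDiagonal : (X → unitary R) →* Matrix.unitaryGroup X R where
  toFun d := ⟨Matrix.diagonal fun x => (d x : R), by
    simp [Matrix.mem_unitaryGroup_iff, Matrix.star_eq_conjTranspose]⟩
  map_one' := Subtype.ext Matrix.diagonal_one
  map_mul' _ _ := Subtype.ext (Matrix.diagonal_mul_diagonal _ _).symm

theorem unitaryGroupDiagonal_injective :
    Function.Injective (unitaryGroupDiagonal (R := R) (X := X)) := fun _ _ h =>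
  funext fun x => Subtype.ext (congrFun (Matrix.diagonal_injective (congrArg Subtype.val h)) x)

/-- The direct sum of two unitary matrices. -/
def unitaryGroupBlock :
    Matrix.unitaryGroup X R × Matrix.unitaryGroup Y R →* Matrix.unitaryGroup (X ⊕ Y) R where
  toFun M := ⟨Matrix.fromBlocks M.1 0 0 M.2, by
    have h₁ := Matrix.mem_unitaryGroup_iff.mp M.1.2
    have h₂ := Matrix.mem_unitaryGroup_iff.mp M.2.2
    rw [Matrix.star_eq_conjTranspose] at h₁ h₂
    simp [Matrix.mem_unitaryGroup_iff, Matrix.star_eq_conjTranspose,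
      Matrix.fromBlocks_conjTranspose, Matrix.fromBlocks_multiply, h₁, h₂]⟩
  map_one' := Subtype.ext Matrix.fromBlocks_one
  map_mul' M N := Subtype.ext (by simp [Matrix.fromBlocks_multiply])

theorem unitaryGroupBlock_injective :
    Function.Injective (unitaryGroupBlock (R := R) (X := X) (Y := Y)) := fun _ _ h =>
  have h' := Matrix.fromBlocks_inj.mp (congrArg Subtype.val h)
  Prod.ext (Subtype.ext h'.1) (Subtype.ext h'.2.2.2)

theorem det_unitaryGroupBlock (M : Matrix.unitaryGroup X R) (N : Matrix.unitaryGroup Y R) :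
    (unitaryGroupBlock (M, N) : Matrix (X ⊕ Y) (X ⊕ Y) R).det =
      (M : Matrix X X R).det * (N : Matrix Y Y R).det :=
  Matrix.det_fromBlocks_zero₂₁ _ _ _

theorem conj_unitaryGroupPerm (σ : Equiv.Perm X) (M : Matrix.unitaryGroup X R) :
    MulAut.conj (unitaryGroupPerm σ) M = unitaryGroupReindex σ M := by
  rw [MulAut.conj_apply, ← map_inv]
  refine Subtype.ext ?_
  change (σ⁻¹).permMatrix R * M.1 * (σ⁻¹⁻¹).permMatrix R = M.1.submatrix σ.symm σ.symm
  rw [PEquiv.toMatrix_toPEquiv_mul, PEquiv.mul_toMatrix_toPEquiv]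
  rfl

theorem conj_unitaryGroupPerm_diagonal (σ : Equiv.Perm X) (d : X → unitary R) :
    MulAut.conj (unitaryGroupPerm σ) (unitaryGroupDiagonal d) =
      unitaryGroupDiagonal (d ∘ σ.symm) := by
  rw [conj_unitaryGroupPerm]
  exact Subtype.ext (Matrix.submatrix_diagonal_equiv (fun x => (d x : R)) σ.symm)

theorem conj_unitaryGroupPerm_sumComm_block (M N : Matrix.unitaryGroup X R) :
    MulAut.conj (unitaryGroupPerm (Equiv.sumComm X X)) (unitaryGroupBlock (M, N)) =
      unitaryGroupBlock (N, M) := by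
  rw [conj_unitaryGroupPerm]
  exact Subtype.ext (Matrix.fromBlocks_submatrix_sum_swap_sum_swap M.1 0 0 N.1)

/-- The determinant of a unitary matrix as an element of the unitary group of the base ring. -/
def unitaryGroupDet : Matrix.unitaryGroup X R →* unitary R :=
  (Unitary.map
    ⟨(Matrix.detMonoidHom : Matrix X X R →* R), Matrix.det_conjTranspose⟩).toMonoidHom

theorem exists_injective_det_eq_one_sum_unit [TrivialStar R] {G : Type*} [Group G]
    {f : G →* Matrix.unitaryGroup X R} (hf : Function.Injective f) :
    ∃ f' : G →* Matrix.unitaryGroup (X ⊕ Unit) R, Function.Injective f' ∧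
      ∀ g, (f' g : Matrix (X ⊕ Unit) (X ⊕ Unit) R).det = 1 := by
  let d : Matrix.unitaryGroup X R →* Matrix.unitaryGroup Unit R :=
    unitaryGroupDiagonal.comp (MonoidHom.pi fun _ => unitaryGroupDet)
  refine ⟨unitaryGroupBlock.comp (f.prod (d.comp f)), unitaryGroupBlock_injective.comp
    (Function.Injective.of_comp (f := Prod.fst) hf), fun g => ?_⟩
  have hd : (d (f g) : Matrix Unit Unit R).det = star (f g : Matrix X X R).det :=
    (Matrix.det_unique _).trans (star_trivial _).symm
  change (unitaryGroupBlock (f g, d (f g)) : Matrix (X ⊕ Unit) (X ⊕ Unit) R).det = 1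
  rw [det_unitaryGroupBlock, hd]
  exact (Matrix.det_of_mem_unitary (f g).2).2

end Unitary

section RealStructure

variable {G X Y : Type*} [Group G] [Fintype X] [DecidableEq X] [Fintype Y] [DecidableEq Y]

theorem semiconj_ofRealHom_star : Function.Semiconj Complex.ofRealHom star star :=
  fun x => (Complex.conj_ofReal x).symm

/-- Orthogonal matrices regarded as complex unitary matrices. -/
def complexification : Matrix.orthogonalGroup X ℝ →* Matrix.unitaryGroup X ℂ :=
  unitaryGroupMap Complex.ofRealHom semiconj_ofRealHom_star

/-- Entrywise complex conjugation of unitary matrices. -/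
def unitaryGroupConj : Matrix.unitaryGroup X ℂ →* Matrix.unitaryGroup X ℂ :=
  unitaryGroupMap (starRingEnd ℂ) fun _ => rfl

theorem complexification_injective : Function.Injective (complexification (X := X)) :=
  fun _ _ h => Subtype.ext (Matrix.map_injective Complex.ofReal_injective (congrArg Subtype.val h))

theorem det_complexification (M : Matrix.orthogonalGroup X ℝ) :
    (complexification M : Matrix X X ℂ).det = ((M : Matrix X X ℝ).det : ℂ) :=
  (Complex.ofRealHom.map_det M.1).symm

theorem det_unitaryGroupConj (M : Matrix.unitaryGroup X ℂ) :
    (unitaryGroupConj M : Matrix X X ℂ).det = star (M : Matrix X X ℂ).det :=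
  ((starRingEnd ℂ).map_det M.1).symm

theorem unitaryGroupConj_conj (M : Matrix.unitaryGroup X ℂ) :
    unitaryGroupConj (unitaryGroupConj M) = M :=
  Subtype.ext (Matrix.ext fun x y => Complex.conj_conj (M x y))

theorem unitaryGroupConj_block (M : Matrix.unitaryGroup X ℂ) (N : Matrix.unitaryGroup Y ℂ) :
    unitaryGroupConj (unitaryGroupBlock (M, N)) =
      unitaryGroupBlock (unitaryGroupConj M, unitaryGroupConj N) := by
  refine Subtype.ext ((Matrix.fromBlocks_map M.1 0 0 N.1 (starRingEnd ℂ)).trans ?_)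
  rw [Matrix.map_zero _ (map_zero _), Matrix.map_zero _ (map_zero _)]
  rfl

theorem unitaryGroupConj_perm (σ : Equiv.Perm X) :
    unitaryGroupConj (unitaryGroupPerm σ) = unitaryGroupPerm σ :=
  Subtype.ext ((σ⁻¹).toPEquiv.map_toMatrix (starRingEnd ℂ))

theorem unitaryGroupConj_diagonal (d : X → unitary ℂ) :
    unitaryGroupConj (unitaryGroupDiagonal d) = unitaryGroupDiagonal d⁻¹ :=
  Subtype.ext (Matrix.diagonal_map (map_zero (starRingEnd ℂ)))

theorem mem_range_complexification {U : Matrix.unitaryGroup X ℂ} (hU : unitaryGroupConj U = U) :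
    U ∈ (complexification (X := X)).range := by
  have hreal : ((U : Matrix X X ℂ).map Complex.re).map Complex.ofReal = U := by
    ext i j
    exact Complex.conj_eq_iff_re.mp (congrFun₂ (congrArg Subtype.val hU) i j)
  exact ⟨⟨(U : Matrix X X ℂ).map Complex.re, mem_unitaryGroup_of_map_mem semiconj_ofRealHom_star
    Complex.ofReal_injective (hreal.symm ▸ U.2)⟩, Subtype.ext hreal⟩

theorem exists_unitaryGroupConj_eq_perm_mul {σ : Equiv.Perm X} (hσ : σ * σ = 1) :
    ∃ U : Matrix.unitaryGroup X ℂ, unitaryGroupConj U = unitaryGroupPerm σ * U := by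
  let P : Matrix X X ℂ := σ.permMatrix ℂ
  have hinv : σ⁻¹ = σ := inv_eq_of_mul_eq_one_left hσ
  have hP_sq : P * P = 1 := by rw [← Matrix.permMatrix_mul, hσ, Matrix.permMatrix_one]
  have hP_star : star P = P := by
    rw [Matrix.star_eq_conjTranspose, Matrix.conjTranspose_permMatrix, hinv]
  have hP_transpose : P.transpose = P := by rw [Matrix.transpose_permMatrix, hinv]
  -- `U` is a symmetric unitary square root of `P`, whence `conj U = U⁻¹ = P * U`.
  let U : Matrix X X ℂ := ((1 + Complex.I) / 2) • (1 : Matrix X X ℂ) + ((1 - Complex.I) / 2) • P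
  let V : Matrix X X ℂ := ((1 - Complex.I) / 2) • (1 : Matrix X X ℂ) + ((1 + Complex.I) / 2) • P
  have hU_star : star U = V := by
    simp [U, V, hP_star, sub_eq_add_neg]
  have hU_conj : U.map star = V := by
    rw [← Matrix.conjTranspose_transpose, ← Matrix.star_eq_conjTranspose]
    simp [U, V, hP_star, hP_transpose, sub_eq_add_neg]
  have hU : U ∈ Matrix.unitaryGroup X ℂ := by
    rw [Matrix.mem_unitaryGroup_iff, hU_star]
    simp only [U, V, add_mul, mul_add, smul_mul_smul_comm, one_mul, mul_one, hP_sq]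
    match_scalars
    · linear_combination (-1 / 2 : ℂ) * Complex.I_sq
    · linear_combination (1 / 2 : ℂ) * Complex.I_sq
  refine ⟨⟨U, hU⟩, Subtype.ext ?_⟩
  change U.map star = (σ⁻¹).permMatrix ℂ * U
  rw [hU_conj, hinv]
  change V = P * U
  simp only [U, V, mul_add, Matrix.mul_smul, mul_one, hP_sq, add_comm]

theorem exists_complexification_eq_conj {f : G →* Matrix.unitaryGroup X ℂ}
    {P U : Matrix.unitaryGroup X ℂ} (hU : unitaryGroupConj U = P * U)
    (hf : ∀ g, unitaryGroupConj (f g) = MulAut.conj P (f g)) :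
    ∃ f' : G →* Matrix.orthogonalGroup X ℝ,
      ∀ g, complexification (f' g) = MulAut.conj U⁻¹ (f g) := by
  let F : G →* Matrix.unitaryGroup X ℂ := (MulAut.conj U⁻¹).toMonoidHom.comp f
  have hreal (g : G) : F g ∈ (complexification (X := X)).range := by
    apply mem_range_complexification
    change unitaryGroupConj (U⁻¹ * f g * U⁻¹⁻¹) = U⁻¹ * f g * U⁻¹⁻¹
    simp only [map_mul, map_inv, hU, hf, MulAut.conj_apply]
    group
  exact ⟨(MonoidHom.ofInjective complexification_injective).symm.toMonoidHom.comp
    (F.codRestrict _ hreal), fun g =>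
      MonoidHom.apply_ofInjective_symm complexification_injective ⟨F g, hreal g⟩⟩

end RealStructure

section Constructions

variable {G X : Type*} [Group G] [Fintype X] [DecidableEq X]

theorem exists_injective_orthogonal_of_conj_eq_perm_conj {f : G →* Matrix.unitaryGroup X ℂ}
    (hf : Function.Injective f) {σ : Equiv.Perm X} (hσ : σ * σ = 1)
    (hconj : ∀ g, unitaryGroupConj (f g) = MulAut.conj (unitaryGroupPerm σ) (f g)) :
    ∃ f' : G →* Matrix.orthogonalGroup X ℝ, Function.Injective f' ∧
      ∀ g, ((f' g : Matrix X X ℝ).det : ℂ) = (f g : Matrix X X ℂ).det := by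
  obtain ⟨U, hU⟩ := exists_unitaryGroupConj_eq_perm_mul hσ
  obtain ⟨f', hf'⟩ := exists_complexification_eq_conj hU hconj
  refine ⟨f', fun g h hgh => hf ((MulAut.conj U⁻¹).injective ?_), fun g => ?_⟩
  · rw [← hf', ← hf', hgh]
  · have hdet : unitaryGroupDet (MulAut.conj U⁻¹ (f g)) = unitaryGroupDet (f g) := by simp
    rw [← det_complexification, hf']
    exact congrArg Subtype.val hdet

theorem exists_injective_specialOrthogonal_sum_self {f : G →* Matrix.unitaryGroup X ℂ}
    (hf : Function.Injective f) :
    ∃ f' : G →* Matrix.orthogonalGroup (X ⊕ X) ℝ, Function.Injective f' ∧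
      ∀ g, (f' g : Matrix (X ⊕ X) (X ⊕ X) ℝ).det = 1 := by
  let F : G →* Matrix.unitaryGroup (X ⊕ X) ℂ :=
    unitaryGroupBlock.comp (f.prod (unitaryGroupConj.comp f))
  have hF : Function.Injective F := unitaryGroupBlock_injective.comp
    (Function.Injective.of_comp (f := Prod.fst) hf)
  have hswap : (Equiv.sumComm X X * Equiv.sumComm X X : Equiv.Perm (X ⊕ X)) = 1 :=
    Equiv.ext Sum.swap_swap
  have hconj (g : G) :
      unitaryGroupConj (F g) = MulAut.conj (unitaryGroupPerm (Equiv.sumComm X X)) (F g) := by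
    change unitaryGroupConj (unitaryGroupBlock (f g, unitaryGroupConj (f g))) =
      MulAut.conj _ (unitaryGroupBlock (f g, unitaryGroupConj (f g)))
    rw [conj_unitaryGroupPerm_sumComm_block, unitaryGroupConj_block, unitaryGroupConj_conj]
  obtain ⟨f', hf', hdet⟩ := exists_injective_orthogonal_of_conj_eq_perm_conj hF hswap hconj
  refine ⟨f', hf', fun g => Complex.ofReal_injective ?_⟩
  rw [hdet]
  change (unitaryGroupBlock (f g, unitaryGroupConj (f g)) : Matrix (X ⊕ X) (X ⊕ X) ℂ).det = _
  rw [det_unitaryGroupBlock, det_unitaryGroupConj, (Matrix.det_of_mem_unitary (f g).2).2,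
    Complex.ofReal_one]

end Constructions

section Induced

variable {A B R : Type*} [CommGroup A] [Group B] [Fintype B] [DecidableEq B]
  [CommRing R] [StarRing R]

/-- The matrices of the unitary representation of `A ⋊ B` induced from the unitary character `χ` of
`A`, in the basis indexed by the coset representatives `x ∈ B`: an element `a` of `A` acts on the
basis vector `x` by `χ (x⁻¹ • a)` and `B` permutes the basis vectors by left translation. -/
def inducedCharacter (φ : B →* MulAut A) (χ : A →* unitary R) :
    A ⋊[φ] B →* Matrix.unitaryGroup B R :=
  SemidirectProduct.lift
    (unitaryGroupDiagonal.comp (MonoidHom.pi fun x => χ.comp (φ x⁻¹).toMonoidHom))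
    (unitaryGroupPerm.comp (MulAction.toPermHom B B)) fun b => by
      ext1 a
      simp only [MonoidHom.comp_apply, MulEquiv.coe_toMonoidHom, conj_unitaryGroupPerm_diagonal]
      congr 1
      ext x
      simp

theorem inducedCharacter_inl (φ : B →* MulAut A) (χ : A →* unitary R) (a : A) :
    inducedCharacter φ χ (SemidirectProduct.inl a) =
      unitaryGroupDiagonal fun x => χ (φ x⁻¹ a) :=
  SemidirectProduct.lift_inl _ _ _ a

theorem inducedCharacter_inr (φ : B →* MulAut A) (χ : A →* unitary R) (b : B) :
    inducedCharacter φ χ (SemidirectProduct.inr b) =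
      unitaryGroupPerm (MulAction.toPermHom B B b) :=
  SemidirectProduct.lift_inr _ _ _ b

theorem inducedCharacter_injective {φ : B →* MulAut A} (hφ : Function.Injective φ)
    {χ : A →* unitary R} (hχ : Function.Injective χ) :
    Function.Injective (inducedCharacter φ χ) := by
  refine injective_of_injective_comp_inl hφ ?_
  intro a b hab
  simp only [MonoidHom.comp_apply, inducedCharacter_inl] at hab
  simpa using hχ (congrFun (unitaryGroupDiagonal_injective hab) 1)

theorem unitaryGroupConj_inducedCharacter {φ : B →* MulAut A} {t : B} (ht : ∀ a, φ t a = a⁻¹)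
    (χ : A →* unitary ℂ) (g : A ⋊[φ] B) :
    unitaryGroupConj (inducedCharacter φ χ g) =
      MulAut.conj (unitaryGroupPerm (Equiv.mulRight t)) (inducedCharacter φ χ g) := by
  have hφ_mul_inv (x : B) (a : A) : φ (x * t⁻¹)⁻¹ a = (φ x⁻¹ a)⁻¹ := by
    rw [mul_inv_rev, inv_inv, map_mul, MulAut.mul_apply, ht]
  have hperm (b : B) : MulAction.toPermHom B B b =
      Equiv.mulRight t * MulAction.toPermHom B B b * (Equiv.mulRight t)⁻¹ := by
    ext x
    simp [mul_assoc]
  rw [← SemidirectProduct.inl_left_mul_inr_right g]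
  simp only [map_mul, inducedCharacter_inl, inducedCharacter_inr]
  congr 1
  · rw [unitaryGroupConj_diagonal, conj_unitaryGroupPerm_diagonal]
    congr 1
    funext x
    exact ((congrArg χ (hφ_mul_inv x g.left)).trans (map_inv χ _)).symm
  · rw [unitaryGroupConj_perm, MulAut.conj_apply, ← map_mul, ← map_inv, ← map_mul, ← hperm]

theorem det_inducedCharacter_inr [Nontrivial B] (φ : B →* MulAut A) (χ : A →* unitary R)
    {b : B} (hb : ∀ x, x ∈ Subgroup.zpowers b) :
    (inducedCharacter φ χ (SemidirectProduct.inr b) : Matrix B B R).det =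
      -(-1) ^ Fintype.card B := by
  rw [inducedCharacter_inr, det_unitaryGroupPerm, sign_toPermHom_of_forall_mem_zpowers hb]
  simp

theorem exists_injective_orthogonal_of_apply_eq_inv {φ : B →* MulAut A}
    (hφ : Function.Injective φ) {χ : A →* unitary ℂ} (hχ : Function.Injective χ) {t : B}
    (ht : ∀ a, φ t a = a⁻¹) :
    ∃ f : A ⋊[φ] B →* Matrix.orthogonalGroup B ℝ, Function.Injective f ∧
      ∀ g, ((f g : Matrix B B ℝ).det : ℂ) = (inducedCharacter φ χ g : Matrix B B ℂ).det := by
  have ht_sq : t * t = 1 := hφ (MulEquiv.ext fun a => by simp [ht])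
  have hσ : Equiv.mulRight t * Equiv.mulRight t = 1 := Equiv.ext fun x => by
    simp [mul_assoc, ht_sq]
  exact exists_injective_orthogonal_of_conj_eq_perm_conj (inducedCharacter_injective hφ hχ) hσ
    (unitaryGroupConj_inducedCharacter ht χ)

theorem exists_injective_orthogonal_det_eq_neg_one [IsCyclic B] {φ : B →* MulAut A}
    (hφ : Function.Injective φ) {χ : A →* unitary ℂ} (hχ : Function.Injective χ) {t : B}
    (ht : ∀ a, φ t a = a⁻¹) (hB : Even (Nat.card B)) :
    ∃ f : A ⋊[φ] B →* Matrix.orthogonalGroup B ℝ, Function.Injective f ∧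
      ∃ g, (f g : Matrix B B ℝ).det = -1 := by
  rw [Nat.card_eq_fintype_card] at hB
  have : Nontrivial B := Fintype.one_lt_card_iff_nontrivial.mp
    (Nat.one_lt_of_ne_zero_of_even Fintype.card_ne_zero hB)
  obtain ⟨b, hb⟩ := IsCyclic.exists_generator (α := B)
  obtain ⟨f, hf, hdet⟩ := exists_injective_orthogonal_of_apply_eq_inv hφ hχ ht
  refine ⟨f, hf, SemidirectProduct.inr b, Complex.ofReal_injective ?_⟩
  rw [hdet, det_inducedCharacter_inr φ χ hb, hB.neg_one_pow, Complex.ofReal_neg,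
    Complex.ofReal_one]

end Induced

theorem exists_injective_unitary_character (n : ℕ) [NeZero n] :
    ∃ χ : Multiplicative (ZMod n) →* unitary ℂ, Function.Injective χ := by
  let toUnitary : Circle →* unitary ℂ := Circle.coeHom.codRestrict _ fun z =>
    Unitary.mem_iff_self_mul_star.mpr
      ((Complex.mul_conj _).trans (by exact_mod_cast z.normSq_coe))
  have htoUnitary : Function.Injective toUnitary :=
    Circle.coeHom.injective_codRestrict _ _ |>.mpr Circle.coe_injective
  exact ⟨toUnitary.comp ZMod.toCircle.toMonoidHom, htoUnitary.comp ZMod.injective_toCircle⟩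

theorem semidirect_product_linear_actions_general {A B : Type*} [CommGroup A] [Group B]
    [IsCyclic B] [Finite B] {q : ℕ} (hq : Nat.card B = q)
    {χ : A →* unitary ℂ} (hχ : Function.Injective χ) {φ : B →* MulAut A} (hφ : Function.Injective φ)
    (hinv : Even q → ∃ t, ∀ a, φ t a = a⁻¹) :
    (∃ f : A ⋊[φ] B →* Matrix.orthogonalGroup (Fin (2 * q)) ℝ,
      Function.Injective f ∧ ∀ g, (f g : Matrix (Fin (2 * q)) (Fin (2 * q)) ℝ).det = 1) ∧
    (Even q → ∃ f : A ⋊[φ] B →* Matrix.orthogonalGroup (Fin (q + 1)) ℝ,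
      Function.Injective f ∧ ∀ g, (f g : Matrix (Fin (q + 1)) (Fin (q + 1)) ℝ).det = 1) ∧
    (Even q → ∃ f : A ⋊[φ] B →* Matrix.orthogonalGroup (Fin q) ℝ,
      Function.Injective f ∧ ∃ g, (f g : Matrix (Fin q) (Fin q) ℝ).det = -1) := by
  classical
  have := Fintype.ofFinite B
  let e : B ≃ Fin q := Finite.equivFinOfCardEq hq
  refine ⟨?_, fun hq_even => ?_, fun hq_even => ?_⟩
  · obtain ⟨f, hf, hdet⟩ :=
      exists_injective_specialOrthogonal_sum_self (inducedCharacter_injective hφ hχ)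
    let e' : B ⊕ B ≃ Fin (2 * q) :=
      ((e.sumCongr e).trans finSumFinEquiv).trans (finCongr (two_mul q).symm)
    exact ⟨(unitaryGroupReindex e').comp f, (unitaryGroupReindex_injective e').comp hf,
      fun g => (det_unitaryGroupReindex e' (f g)).trans (hdet g)⟩
  · obtain ⟨t, ht⟩ := hinv hq_even
    obtain ⟨f₀, hf₀, -⟩ := exists_injective_orthogonal_of_apply_eq_inv hφ hχ ht
    obtain ⟨f, hf, hdet⟩ := exists_injective_det_eq_one_sum_unit hf₀
    let e' : B ⊕ Unit ≃ Fin (q + 1) := (e.sumCongr finOneEquiv.symm).trans finSumFinEquiv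
    exact ⟨(unitaryGroupReindex e').comp f, (unitaryGroupReindex_injective e').comp hf,
      fun g => (det_unitaryGroupReindex e' (f g)).trans (hdet g)⟩
  · obtain ⟨t, ht⟩ := hinv hq_even
    obtain ⟨f, hf, g, hdet⟩ :=
      exists_injective_orthogonal_det_eq_neg_one hφ hχ ht (hq ▸ hq_even)
    exact ⟨(unitaryGroupReindex e).comp f, (unitaryGroupReindex_injective e).comp hf, g,
      (det_unitaryGroupReindex e (f g)).trans hdet⟩

/-- For `p` an odd prime and `q` a positive divisor of `p - 1`, the semidirect product
`G = ℤ/p ⋊ ℤ/q` (with effective action of `ℤ/q` on `ℤ/p`) admits: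
(a) an injective homomorphism into `SO(2q, ℝ)` (an orthogonal representation in which every
matrix has determinant `1`);
(b) if `q` is even, an injective homomorphism into `SO(q + 1, ℝ)`;
(c) if `q` is even, an injective homomorphism into `O(q, ℝ)` whose image contains a matrix
of determinant `-1`. -/
theorem semidirect_product_linear_actions
    (p q : ℕ) (hp : p.Prime) (hpodd : Odd p) (hq : 0 < q) (hdvd : q ∣ p - 1)
    (φ : Multiplicative (ZMod q) →* MulAut (Multiplicative (ZMod p)))
    (hφ : Function.Injective φ) :
    (∃ f : (Multiplicative (ZMod p) ⋊[φ] Multiplicative (ZMod q)) →*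
        Matrix.orthogonalGroup (Fin (2 * q)) ℝ,
      Function.Injective f ∧ ∀ g, ((f g : Matrix (Fin (2 * q)) (Fin (2 * q)) ℝ)).det = 1) ∧
    (Even q → ∃ f : (Multiplicative (ZMod p) ⋊[φ] Multiplicative (ZMod q)) →*
        Matrix.orthogonalGroup (Fin (q + 1)) ℝ,
      Function.Injective f ∧ ∀ g, ((f g : Matrix (Fin (q + 1)) (Fin (q + 1)) ℝ)).det = 1) ∧
    (Even q → ∃ f : (Multiplicative (ZMod p) ⋊[φ] Multiplicative (ZMod q)) →*
        Matrix.orthogonalGroup (Fin q) ℝ,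
      Function.Injective f ∧ ∃ g, ((f g : Matrix (Fin q) (Fin q) ℝ)).det = -1) := by
  have : Fact p.Prime := ⟨hp⟩
  have : NeZero q := ⟨hq.ne'⟩
  have : IsSimpleGroup (Multiplicative (ZMod p)) :=
    isSimpleGroup_of_prime_card (p := p) (by simp)
  have hcard : Nat.card (Multiplicative (ZMod q)) = q := by simp
  obtain ⟨χ, hχ⟩ := exists_injective_unitary_character p
  exact semidirect_product_linear_actions_general hcard hχ hφ
    fun hq_even => exists_apply_eq_inv_of_even_card hφ (hcard.symm ▸ hq_even)
end

section
/- Let p be an odd prime. The subgroup of PSL(2, p) consisting of classes of upper triangular matrices is isomorphic to a semidirect product Z/p ⋊ Z/((p−1)/2), where Z/((p−1)/2) is the image of the diagonal matrices, Z/p is the image of the upper unitriangular matrices (both diagonal entries equal to 1), and the conjugation action of Z/((p−1)/2) on the normal subgroup Z/p is effective (i.e. the induced homomorphism Z/((p−1)/2) → Aut(Z/p) is injective). -/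
/-- The subgroup of `SL(2, p)` of upper triangular matrices. -/
def upperTriangularSL (p : ℕ) : Subgroup (Matrix.SpecialLinearGroup (Fin 2) (ZMod p)) where
  carrier := {A | A.1 1 0 = 0}
  one_mem' := by simp
  mul_mem' := by
    intro a b ha hb
    simp only [Set.mem_setOf_eq] at *
    show ((a : Matrix (Fin 2) (Fin 2) (ZMod p)) * b) 1 0 = 0
    rw [Matrix.mul_apply, Fin.sum_univ_two, ha, hb]
    ring
  inv_mem' := by
    intro a ha
    simp only [Set.mem_setOf_eq] at *
    show (a⁻¹ : Matrix.SpecialLinearGroup (Fin 2) (ZMod p)).1 1 0 = 0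
    rw [Matrix.SpecialLinearGroup.coe_inv, Matrix.adjugate_fin_two]
    simp [ha]

/-- The subgroup of `SL(2, p)` of upper unitriangular matrices (both diagonal entries `1`). -/
def unitriangularSL (p : ℕ) : Subgroup (Matrix.SpecialLinearGroup (Fin 2) (ZMod p)) where
  carrier := {A | A.1 1 0 = 0 ∧ A.1 0 0 = 1 ∧ A.1 1 1 = 1}
  one_mem' := by simp
  mul_mem' := by
    intro a b ha hb
    simp only [Set.mem_setOf_eq] at *
    obtain ⟨ha1, ha2, ha3⟩ := ha
    obtain ⟨hb1, hb2, hb3⟩ := hb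
    refine ⟨?_, ?_, ?_⟩ <;>
    · show ((a : Matrix (Fin 2) (Fin 2) (ZMod p)) * b) _ _ = _
      rw [Matrix.mul_apply, Fin.sum_univ_two]
      simp [ha1, ha2, ha3, hb1, hb2, hb3]
  inv_mem' := by
    intro a ha
    simp only [Set.mem_setOf_eq] at *
    obtain ⟨ha1, ha2, ha3⟩ := ha
    refine ⟨?_, ?_, ?_⟩ <;>
    · show (a⁻¹ : Matrix.SpecialLinearGroup (Fin 2) (ZMod p)).1 _ _ = _
      rw [Matrix.SpecialLinearGroup.coe_inv, Matrix.adjugate_fin_two]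
      simp [ha1, ha2, ha3]

/-- The subgroup of `SL(2, p)` of diagonal matrices. -/
def diagonalSL (p : ℕ) : Subgroup (Matrix.SpecialLinearGroup (Fin 2) (ZMod p)) where
  carrier := {A | A.1 1 0 = 0 ∧ A.1 0 1 = 0}
  one_mem' := by simp
  mul_mem' := by
    intro a b ha hb
    simp only [Set.mem_setOf_eq] at *
    obtain ⟨ha1, ha2⟩ := ha
    obtain ⟨hb1, hb2⟩ := hb
    constructor <;>
    · show ((a : Matrix (Fin 2) (Fin 2) (ZMod p)) * b) _ _ = _
      rw [Matrix.mul_apply, Fin.sum_univ_two]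
      simp [ha1, ha2, hb1, hb2]
  inv_mem' := by
    intro a ha
    simp only [Set.mem_setOf_eq] at *
    obtain ⟨ha1, ha2⟩ := ha
    constructor <;>
    · show (a⁻¹ : Matrix.SpecialLinearGroup (Fin 2) (ZMod p)).1 _ _ = _
      rw [Matrix.SpecialLinearGroup.coe_inv, Matrix.adjugate_fin_two]
      simp [ha1, ha2]

/-!
Over a commutative ring `R`, the Borel matrix with rows `(a, b)` and `(0, a⁻¹)` acts on the affine
line by the Möbius transformation `z ↦ a² z + a b`. This defines a surjection of the Borel subgroup
of `SL(2, R)` onto `R ⋊ (Rˣ)²` whose kernel is the center of `SL(2, R)`, and it sends unitriangular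
matrices to translations and diagonal matrices to homotheties. When `R = 𝔽_p` with `p` odd, the
group of squares `(𝔽_pˣ)²` is cyclic of order `(p - 1) / 2`.
-/

section MapEquiv

variable {G Q S : Type*} [Group G] [Group Q] [Group S] {q : G →* Q} {B : Subgroup G} {f : B →* S}

theorem exists_mulEquiv_map_of_ker_eq (hf : Function.Surjective f)
    (hker : q.ker.subgroupOf B = f.ker) :
    ∃ e : B.map q ≃* S, ∀ b, e (q.subgroupMap B b) = f b := by
  have hq := q.subgroupMap_surjective B
  have hq_ker : f.ker = (q.subgroupMap B).ker := by rw [Subgroup.ker_subgroupMap, hker]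
  refine ⟨(QuotientGroup.liftEquiv f.ker hq hq_ker).symm.trans
    (QuotientGroup.liftEquiv f.ker hf rfl), fun b ↦ ?_⟩
  rw [MulEquiv.trans_apply, ← QuotientGroup.liftEquiv_coe f.ker hq hq_ker,
    MulEquiv.symm_apply_apply, QuotientGroup.liftEquiv_coe]

theorem coe_mem_map_map_subtype_iff {e : B.map q ≃* S} (he : ∀ b, e (q.subgroupMap B b) = f b)
    (V : Subgroup B) (u : B.map q) :
    (u : Q) ∈ (V.map B.subtype).map q ↔ e u ∈ V.map f := by
  have hf : f = e.toMonoidHom.comp (q.subgroupMap B) := MonoidHom.ext fun b ↦ (he b).symm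
  have hq : q.comp B.subtype = (B.map q).subtype.comp (q.subgroupMap B) := rfl
  rw [hf, ← Subgroup.map_map, Subgroup.map_map, hq, ← Subgroup.map_map]
  exact (Subgroup.mem_map_iff_mem (B.map q).subtype_injective).trans
    (Subgroup.mem_map_iff_mem e.injective).symm

end MapEquiv

section RangeEquiv

variable {G H C : Type*} [Group G] [Group H] [Group C] {f : G →* H} (σ : C ≃* f.range)

/-- The homomorphism `f`, with its range replaced by the copy `C` along `σ`. -/
def homOfRangeEquiv : G →* C := σ.symm.toMonoidHom.comp f.rangeRestrict

theorem coe_apply_homOfRangeEquiv (g : G) : (σ (homOfRangeEquiv σ g) : H) = f g := by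
  simp [homOfRangeEquiv]

theorem homOfRangeEquiv_surjective : Function.Surjective (homOfRangeEquiv σ) :=
  σ.symm.surjective.comp f.rangeRestrict_surjective

theorem homOfRangeEquiv_eq_one_iff (g : G) : homOfRangeEquiv σ g = 1 ↔ f g = 1 := by
  rw [← coe_apply_homOfRangeEquiv σ, OneMemClass.coe_eq_one, map_eq_one_iff σ σ.injective]

end RangeEquiv

section UnitMulAut

variable (R : Type*) [Ring R]

/-- The action of `Rˣ` on the additive group of `R` by left multiplication, with the additive group
written multiplicatively as `SemidirectProduct` requires. -/
def unitMulAut : Rˣ →* MulAut (Multiplicative R) :=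
  (MulAutMultiplicative R).symm.toMonoidHom.comp AddAut.mulLeft

theorem unitMulAut_apply (a : Rˣ) (x : Multiplicative R) :
    unitMulAut R a x = Multiplicative.ofAdd ((a : R) * x.toAdd) := rfl

theorem unitMulAut_injective : Function.Injective (unitMulAut R) := by
  intro a b h
  have h_one := DFunLike.congr_fun h (Multiplicative.ofAdd 1)
  simpa [unitMulAut_apply, Units.val_inj] using h_one

end UnitMulAut

/-- The Borel subgroup of upper triangular matrices in `SL(2, R)`, generalizing `upperTriangularSL`
from `ZMod p` to an arbitrary commutative ring. -/
def borelSL2 (R : Type*) [CommRing R] : Subgroup (Matrix.SpecialLinearGroup (Fin 2) R) where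
  carrier := {A | A.1 1 0 = 0}
  one_mem' := by simp
  mul_mem' := by simp_all [Matrix.mul_apply, Fin.sum_univ_two]
  inv_mem' := by simp [Matrix.adjugate_fin_two]

namespace borelSL2

section CommRing

variable {R : Type*} [CommRing R]

theorem coe_apply_one_zero (A : borelSL2 R) : A.1 1 0 = 0 := A.2

theorem coe_apply_zero_zero_mul_one_one (A : borelSL2 R) : A.1 0 0 * A.1 1 1 = 1 := by
  have h_det := A.1.det_coe
  rwa [Matrix.det_fin_two, coe_apply_one_zero A, mul_zero, sub_zero] at h_det

-- The cocycle identity for the translation part of the action on the affine line.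
theorem mul_apply_zero_zero_mul_apply_zero_one (A B : borelSL2 R) :
    (A * B).1 0 0 * (A * B).1 0 1 = A.1 0 0 * A.1 0 1 + A.1 0 0 ^ 2 * (B.1 0 0 * B.1 0 1) := by
  simp only [Subgroup.coe_mul, Matrix.SpecialLinearGroup.coe_mul, Matrix.mul_apply,
    Fin.sum_univ_two, coe_apply_one_zero B]
  linear_combination (A.1 0 0 * A.1 0 1) * coe_apply_zero_zero_mul_one_one B

variable (R)

/-- The one-parameter subgroup `x ↦ !![1, x; 0, 1]`, whose image is the group of upper
unitriangular matrices. -/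
def unipotent : Multiplicative R →* borelSL2 R where
  toFun x := ⟨⟨!![1, x.toAdd; 0, 1], by simp⟩, rfl⟩
  map_one' := by ext i j; fin_cases i <;> fin_cases j <;> rfl
  map_mul' x y := by
    have h_mul : !![1, x.toAdd + y.toAdd; 0, 1] = !![1, x.toAdd; 0, 1] * !![1, y.toAdd; 0, 1] := by
      simp [add_comm]
    exact Subtype.ext (Subtype.ext h_mul)

/-- The cocharacter `a ↦ !![a, 0; 0, a⁻¹]`, whose image is the group of diagonal matrices. -/
def torus : Rˣ →* borelSL2 R where
  toFun a := ⟨⟨!![(a : R), 0; 0, ((a⁻¹ : Rˣ) : R)], by simp⟩, rfl⟩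
  map_one' := by ext i j; fin_cases i <;> fin_cases j <;> simp
  map_mul' a b := by
    have h_mul : !![((a * b : Rˣ) : R), 0; 0, (((a * b)⁻¹ : Rˣ) : R)] =
        !![(a : R), 0; 0, ((a⁻¹ : Rˣ) : R)] * !![(b : R), 0; 0, ((b⁻¹ : Rˣ) : R)] := by
      simp [mul_comm]
    exact Subtype.ext (Subtype.ext h_mul)

/-- The character of the Borel subgroup given by the upper left entry, as a unit of `R`. -/
def diagUnit : borelSL2 R →* Rˣ where
  toFun A := ⟨A.1 0 0, A.1 1 1, coe_apply_zero_zero_mul_one_one A,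
    mul_comm (A.1 0 0) _ ▸ coe_apply_zero_zero_mul_one_one A⟩
  map_one' := by ext; simp
  map_mul' A B := by
    ext
    simp [Matrix.mul_apply, coe_apply_one_zero B]

variable {R}

@[simp]
theorem coe_diagUnit (A : borelSL2 R) : (diagUnit R A : R) = A.1 0 0 := rfl

@[simp]
theorem diagUnit_unipotent (x : Multiplicative R) : diagUnit R (unipotent R x) = 1 := Units.ext rfl

@[simp]
theorem diagUnit_torus (a : Rˣ) : diagUnit R (torus R a) = a := Units.ext rfl

variable {C : Type*} [Group C] (σ : C ≃* (powMonoidHom 2 : Rˣ →* Rˣ).range)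

/-- The action of a group `C`, identified by `σ` with the squares of `Rˣ`, on the additive group of
`R` by multiplication. -/
def squareAction : C →* MulAut (Multiplicative R) :=
  (unitMulAut R).comp ((powMonoidHom 2 : Rˣ →* Rˣ).range.subtype.comp σ.toMonoidHom)

theorem squareAction_apply (c : C) (x : Multiplicative R) :
    squareAction σ c x = Multiplicative.ofAdd (((σ c : Rˣ) : R) * x.toAdd) := rfl

theorem squareAction_injective : Function.Injective (squareAction σ) :=
  (unitMulAut_injective R).comp (Subtype.val_injective.comp σ.injective)

/-- The action of the Borel subgroup on the affine line by Möbius transformations: the matrix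
`!![a, b; 0, a⁻¹]` acts by `z ↦ a ^ 2 * z + a * b`, encoded as the pair `(a * b, a ^ 2)`. -/
def affineHom : borelSL2 R →* Multiplicative R ⋊[squareAction σ] C where
  toFun A := ⟨Multiplicative.ofAdd (A.1 0 0 * A.1 0 1), homOfRangeEquiv σ (diagUnit R A)⟩
  map_one' := by ext <;> simp
  map_mul' A B := by
    ext
    · simpa [squareAction_apply, coe_apply_homOfRangeEquiv] using
        mul_apply_zero_zero_mul_apply_zero_one A B
    · simp

theorem affineHom_comp_unipotent :
    (affineHom σ).comp (unipotent R) = SemidirectProduct.inl := by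
  ext x
  · simp [affineHom, unipotent]
  · simp [affineHom]

theorem affineHom_comp_torus :
    (affineHom σ).comp (torus R) = SemidirectProduct.inr.comp (homOfRangeEquiv σ) := by
  ext a
  · simp [affineHom, torus]
  · simp [affineHom]

theorem affineHom_surjective : Function.Surjective (affineHom σ) := by
  intro s
  obtain ⟨a, ha⟩ := homOfRangeEquiv_surjective σ s.right
  refine ⟨unipotent R s.left * torus R a, ?_⟩
  rw [map_mul, ← MonoidHom.comp_apply, affineHom_comp_unipotent, ← MonoidHom.comp_apply,
    affineHom_comp_torus, MonoidHom.comp_apply, ha, SemidirectProduct.inl_left_mul_inr_right]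

theorem coe_mem_center_iff (A : borelSL2 R) :
    (A : Matrix.SpecialLinearGroup (Fin 2) R) ∈ Subgroup.center _ ↔
      A.1 0 1 = 0 ∧ diagUnit R A ^ 2 = 1 := by
  have h_mul := coe_apply_zero_zero_mul_one_one A
  rw [Matrix.SpecialLinearGroup.mem_center_iff, Units.ext_iff, Units.val_pow_eq_pow_val,
    coe_diagUnit, Units.val_one]
  constructor
  · rintro ⟨r, hr, hA⟩
    simpa [← hA] using hr
  · rintro ⟨h01, h00⟩
    refine ⟨A.1 0 0, h00, ?_⟩
    have h11 : A.1 1 1 = A.1 0 0 := by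
      linear_combination A.1 0 0 * h_mul - A.1 1 1 * h00
    ext i j
    fin_cases i <;> fin_cases j <;> simp [h01, h11, coe_apply_one_zero]

theorem center_subgroupOf_eq_ker_affineHom :
    (Subgroup.center (Matrix.SpecialLinearGroup (Fin 2) R)).subgroupOf (borelSL2 R) =
      (affineHom σ).ker := by
  ext A
  rw [Subgroup.mem_subgroupOf, coe_mem_center_iff, MonoidHom.mem_ker, SemidirectProduct.ext_iff]
  exact and_congr (diagUnit R A).mul_right_eq_zero.symm (homOfRangeEquiv_eq_one_iff σ _).symm

theorem range_unipotent_map_affineHom :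
    (unipotent R).range.map (affineHom σ) = SemidirectProduct.inl.range := by
  rw [MonoidHom.map_range, affineHom_comp_unipotent]

theorem range_torus_map_affineHom :
    (torus R).range.map (affineHom σ) = SemidirectProduct.inr.range := by
  rw [MonoidHom.map_range, affineHom_comp_torus, MonoidHom.range_comp,
    MonoidHom.range_eq_top.mpr (homOfRangeEquiv_surjective σ), ← MonoidHom.range_eq_map]

end CommRing

section ZMod

variable (p : ℕ)

theorem unitriangularSL_eq_map_range_unipotent :
    unitriangularSL p = (unipotent (ZMod p)).range.map (borelSL2 (ZMod p)).subtype := by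
  ext A
  constructor
  · rintro ⟨h10, h00, h11⟩
    refine ⟨⟨A, h10⟩, ⟨Multiplicative.ofAdd (A.1 0 1), ?_⟩, rfl⟩
    ext i j
    fin_cases i <;> fin_cases j <;> simp [unipotent, h10, h00, h11]
  · rintro ⟨_, ⟨x, rfl⟩, rfl⟩
    exact ⟨rfl, rfl, rfl⟩

theorem diagonalSL_eq_map_range_torus :
    diagonalSL p = (torus (ZMod p)).range.map (borelSL2 (ZMod p)).subtype := by
  ext A
  constructor
  · rintro ⟨h10, h01⟩
    refine ⟨⟨A, h10⟩, ⟨diagUnit _ ⟨A, h10⟩, ?_⟩, rfl⟩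
    ext i j
    fin_cases i <;> fin_cases j <;> simp [torus, diagUnit, h10, h01]
  · rintro ⟨_, ⟨a, rfl⟩, rfl⟩
    exact ⟨rfl, rfl⟩

end ZMod

end borelSL2

theorem nonempty_zmod_mulEquiv_range_powMonoidHom {G : Type*} [CommGroup G] [IsCyclic G]
    [Finite G] {d : ℕ} (hd : d ∣ Nat.card G) :
    Nonempty (Multiplicative (ZMod (Nat.card G / d)) ≃* (powMonoidHom d : G →* G).range) := by
  have h_card : Nat.card (powMonoidHom d : G →* G).range = Nat.card G / d := by
    rw [IsCyclic.card_powMonoidHom_range, Nat.gcd_eq_right hd]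
  have h_zmod : Nat.card (Multiplicative (ZMod (Nat.card G / d))) = Nat.card G / d := by
    rw [Nat.card_congr Multiplicative.toAdd, Nat.card_zmod]
  exact ⟨mulEquivOfCyclicCardEq (h_zmod.trans h_card.symm)⟩

theorem nonempty_zmod_mulEquiv_range_units_sq {K : Type*} [Field K] [Finite K]
    (hK : Odd (Nat.card K)) :
    Nonempty (Multiplicative (ZMod ((Nat.card K - 1) / 2)) ≃*
      (powMonoidHom 2 : Kˣ →* Kˣ).range) := by
  have h_two_dvd : 2 ∣ Nat.card Kˣ := Nat.card_units K ▸ (hK.tsub_odd odd_one).two_dvd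
  rw [← Nat.card_units]
  exact nonempty_zmod_mulEquiv_range_powMonoidHom h_two_dvd

theorem upper_triangular_subgroup_of_PSL_general {R C : Type*} [CommRing R] [Group C]
    (σ : C ≃* (powMonoidHom 2 : Rˣ →* Rˣ).range) :
    ∃ φ : C →* MulAut (Multiplicative R),
      Function.Injective φ ∧
      ∃ e : ((borelSL2 R).map
          (QuotientGroup.mk' (Subgroup.center (Matrix.SpecialLinearGroup (Fin 2) R)))) ≃*
          (Multiplicative R ⋊[φ] C),
        (∀ u : ((borelSL2 R).map
            (QuotientGroup.mk' (Subgroup.center (Matrix.SpecialLinearGroup (Fin 2) R)))),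
          ((u : Matrix.ProjectiveSpecialLinearGroup (Fin 2) R) ∈
            ((borelSL2.unipotent R).range.map (borelSL2 R).subtype).map
              (QuotientGroup.mk' (Subgroup.center (Matrix.SpecialLinearGroup (Fin 2) R))) ↔
          e u ∈ (SemidirectProduct.inl : Multiplicative R →* _).range)) ∧
        (∀ u : ((borelSL2 R).map
            (QuotientGroup.mk' (Subgroup.center (Matrix.SpecialLinearGroup (Fin 2) R)))),
          ((u : Matrix.ProjectiveSpecialLinearGroup (Fin 2) R) ∈
            ((borelSL2.torus R).range.map (borelSL2 R).subtype).map
              (QuotientGroup.mk' (Subgroup.center (Matrix.SpecialLinearGroup (Fin 2) R))) ↔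
          e u ∈ (SemidirectProduct.inr : C →* _).range)) := by
  obtain ⟨e, he⟩ := exists_mulEquiv_map_of_ker_eq
    (q := QuotientGroup.mk' (Subgroup.center (Matrix.SpecialLinearGroup (Fin 2) R)))
    (f := borelSL2.affineHom σ) (borelSL2.affineHom_surjective σ)
    (by rw [QuotientGroup.ker_mk', borelSL2.center_subgroupOf_eq_ker_affineHom σ])
  refine ⟨borelSL2.squareAction σ, borelSL2.squareAction_injective σ, e, fun u ↦ ?_, fun u ↦ ?_⟩
  · rw [← borelSL2.range_unipotent_map_affineHom σ]
    exact coe_mem_map_map_subtype_iff he _ u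
  · rw [← borelSL2.range_torus_map_affineHom σ]
    exact coe_mem_map_map_subtype_iff he _ u

/-- For an odd prime `p`, the subgroup of `PSL(2, p)` consisting of classes of upper
triangular matrices is isomorphic to a semidirect product `ℤ/p ⋊ ℤ/((p-1)/2)` with an
effective action of `ℤ/((p-1)/2)` on the normal subgroup `ℤ/p`; under the isomorphism, the
normal factor `ℤ/p` corresponds to the image of the unitriangular matrices and the factor
`ℤ/((p-1)/2)` corresponds to the image of the diagonal matrices. -/
theorem upper_triangular_subgroup_of_PSL (p : ℕ) (hp : p.Prime) (hpodd : Odd p) :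
    ∃ φ : Multiplicative (ZMod ((p - 1) / 2)) →* MulAut (Multiplicative (ZMod p)),
      Function.Injective φ ∧
      ∃ e : ((upperTriangularSL p).map
          (QuotientGroup.mk' (Subgroup.center (Matrix.SpecialLinearGroup (Fin 2) (ZMod p))))) ≃*
          (Multiplicative (ZMod p) ⋊[φ] Multiplicative (ZMod ((p - 1) / 2))),
        (∀ u : ((upperTriangularSL p).map
            (QuotientGroup.mk' (Subgroup.center (Matrix.SpecialLinearGroup (Fin 2) (ZMod p))))),
          ((u : Matrix.ProjectiveSpecialLinearGroup (Fin 2) (ZMod p)) ∈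
            (unitriangularSL p).map
              (QuotientGroup.mk' (Subgroup.center (Matrix.SpecialLinearGroup (Fin 2) (ZMod p)))) ↔
          e u ∈ (SemidirectProduct.inl : Multiplicative (ZMod p) →* _).range)) ∧
        (∀ u : ((upperTriangularSL p).map
            (QuotientGroup.mk' (Subgroup.center (Matrix.SpecialLinearGroup (Fin 2) (ZMod p))))),
          ((u : Matrix.ProjectiveSpecialLinearGroup (Fin 2) (ZMod p)) ∈
            (diagonalSL p).map
              (QuotientGroup.mk' (Subgroup.center (Matrix.SpecialLinearGroup (Fin 2) (ZMod p)))) ↔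
          e u ∈ (SemidirectProduct.inr : Multiplicative (ZMod ((p - 1) / 2)) →* _).range)) := by
  have : Fact p.Prime := ⟨hp⟩
  obtain ⟨σ⟩ := nonempty_zmod_mulEquiv_range_units_sq (K := ZMod p) (by rwa [Nat.card_zmod])
  rw [Nat.card_zmod] at σ
  rw [borelSL2.unitriangularSL_eq_map_range_unipotent, borelSL2.diagonalSL_eq_map_range_torus]
  exact upper_triangular_subgroup_of_PSL_general σ
end

section
/- Let p be an odd prime, q a positive integer, and G = Z/p ⋊ Z/q a semidirect product in which the action of Z/q on the normal subgroup Z/p is effective. Suppose G acts faithfully by diffeomorphisms on Euclidean space R^n. Then: (a) if q is odd, n ≥ 2q; (b) if q is even, n ≥ q; (c) if q is even and every element of G acts by orientation-preserving diffeomorphisms of R^n, then n ≥ q + 1. -/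
/-!
Let `m a` be the multiplicity of the character `a` in the complexified isotropy representation of
`ℤ/p` at a fixed point. The fixed set of `ℤ/p` is connected by Smith theory, so `m` does not depend
on the point, and conjugation shows that `m` is invariant under multiplication by the image of
`ℤ/q` in `(ℤ/p)ˣ`. Some `a ≠ 0` has `m a ≠ 0`, as otherwise the fixed set would be open. Its orbit
has `q` elements, so `n = ∑ b, m b ≥ m 0 + q`. The representation is real, so `m (-b) = m b`; if `q`
is odd, then `-1` is not in the image of `ℤ/q` and the orbit doubles. If `n = q` is even, then
`m 0 = 0`, so the fixed set is a single point, which is fixed by the whole group. There a generator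
of `ℤ/q` permutes `q` eigenlines of `ℤ/p` cyclically, hence has determinant `(-1) ^ (q - 1) = -1`.

Smith theory is applied to chains instead of homology. For `t` of period `p` and an invariant cycle
`z` of fixed points, contractibility of `ℝⁿ` provides small chains with `∂ c₀ = z` and
`∂ cₖ₊₁ = s (k + 1) cₖ`, where `s k` alternates between `t - 1` and `1 + t + ⋯ + t ^ (p - 1)`.
Gaps between the coordinates along an orbit label the points that are not close to a fixed point
equivariantly by a complex of bounded dimension on which `ℤ/p` acts freely. Tate cohomology of free
actions vanishes, so a functional on labels can be transported up the sequence until it vanishes for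
dimensional reasons. Thus `z` cannot be the empty simplex if there is no fixed point, nor the
difference of two fixed points in different components.
-/

namespace SmithTheory

/-! ### Augmented ordered chains -/

section Chains

variable {R X Y : Type*} [CommRing R]

/-- Ordered simplicial chains with coefficients in `R`: formal combinations of lists of vertices.
The empty list is the simplex of dimension `-1`, so the complex is augmented. -/
abbrev Chain (R X : Type*) [CommRing R] := List X →₀ R

namespace Chain

/-- The cone operator with apex `x`, which adds `x` as the first vertex. -/
noncomputable def cone (x : X) : Chain R X →ₗ[R] Chain R X :=
  Finsupp.lmapDomain R R (List.cons x)

/-- The chain map induced by a map of vertices. -/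
noncomputable def map (f : X → Y) : Chain R X →ₗ[R] Chain R Y :=
  Finsupp.lmapDomain R R (List.map f)

/-- The alternating sum of the faces of a simplex. -/
noncomputable def simplexBoundary : List X → Chain R X
  | [] => 0
  | x :: l => Finsupp.single l 1 - cone x (simplexBoundary l)

/-- The boundary operator of the augmented ordered chain complex. -/
noncomputable def boundary : Chain R X →ₗ[R] Chain R X :=
  Finsupp.linearCombination R simplexBoundary

@[simp] lemma cone_single (x : X) (l : List X) (r : R) :
    cone x (Finsupp.single l r) = Finsupp.single (x :: l) r :=
  Finsupp.mapDomain_single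

@[simp] lemma map_single (f : X → Y) (l : List X) (r : R) :
    map f (Finsupp.single l r) = Finsupp.single (l.map f) r :=
  Finsupp.mapDomain_single

lemma boundary_single_nil : boundary (Finsupp.single ([] : List X) (1 : R)) = 0 := by
  simp [boundary, simplexBoundary]

lemma boundary_single_cons (x : X) (l : List X) :
    boundary (Finsupp.single (x :: l) (1 : R)) =
      Finsupp.single l 1 - cone x (boundary (Finsupp.single l 1)) := by
  simp [boundary, simplexBoundary]

section Support

variable {M : Type*} [AddCommGroup M] [Module R M] {P : Set (List X)}

lemma hom_ext {f g : Chain R X →ₗ[R] M}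
    (h : ∀ l, f (Finsupp.single l 1) = g (Finsupp.single l 1)) : f = g :=
  Finsupp.lhom_ext' fun l ↦ LinearMap.ext_ring (h l)

lemma supported_le_iff {S : Submodule R (Chain R X)} :
    Finsupp.supported R R P ≤ S ↔ ∀ l ∈ P, Finsupp.single l (1 : R) ∈ S := by
  rw [Finsupp.supported_eq_span_single, Submodule.span_le, Set.image_subset_iff]
  rfl

lemma map_mem_of_forall_single_mem {f : Chain R X →ₗ[R] M} {S : Submodule R M}
    (h : ∀ l ∈ P, f (Finsupp.single l 1) ∈ S) {c : Chain R X} (hc : c ∈ Finsupp.supported R R P) :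
    f c ∈ S :=
  (supported_le_iff (S := S.comap f)).2 h hc

lemma eq_of_forall_single_eq {f g : Chain R X →ₗ[R] M}
    (h : ∀ l ∈ P, f (Finsupp.single l 1) = g (Finsupp.single l 1)) {c : Chain R X}
    (hc : c ∈ Finsupp.supported R R P) : f c = g c :=
  (supported_le_iff (S := LinearMap.eqLocus f g)).2 h hc

end Support

lemma map_comp_cone (f : X → Y) (x : X) :
    map (R := R) f ∘ₗ cone x = cone (f x) ∘ₗ map f :=
  hom_ext fun l ↦ by simp

lemma map_comp_map {Z : Type*} (g : Y → Z) (f : X → Y) :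
    map (R := R) g ∘ₗ map f = map (g ∘ f) :=
  hom_ext fun l ↦ by simp

lemma map_id : map (R := R) (id : X → X) = LinearMap.id :=
  hom_ext fun l ↦ by simp

lemma map_pow_eq_map_iterate (f : X → X) (n : ℕ) : map (R := R) f ^ n = map f^[n] := by
  induction n with
  | zero => exact map_id.symm
  | succ n ih => rw [pow_succ, ih, Module.End.mul_eq_comp, map_comp_map, Function.iterate_succ]

lemma boundary_cone (x : X) (c : Chain R X) :
    boundary (cone x c) = c - cone x (boundary c) := by
  suffices boundary ∘ₗ cone x = LinearMap.id - cone (R := R) x ∘ₗ boundary from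
    LinearMap.congr_fun this c
  exact hom_ext fun l ↦ by simp [boundary_single_cons]

lemma boundary_comp_map (f : X → Y) :
    boundary ∘ₗ map (R := R) f = map f ∘ₗ boundary := by
  refine hom_ext fun l ↦ ?_
  induction l with
  | nil => simp [boundary_single_nil]
  | cons x l ih =>
    have cone_comm (c : Chain R X) : map f (cone x c) = cone (f x) (map f c) :=
      LinearMap.congr_fun (map_comp_cone f x) c
    simp_all [boundary_single_cons]

lemma boundary_map (f : X → Y) (c : Chain R X) : boundary (map f c) = map f (boundary c) :=
  LinearMap.congr_fun (boundary_comp_map f) c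

lemma boundary_single_mem (l : List X) :
    boundary (Finsupp.single l (1 : R)) ∈
      Finsupp.supported R R {l' | l'.Sublist l ∧ l'.length + 1 = l.length} := by
  induction l with
  | nil => simp [boundary_single_nil]
  | cons x l ih =>
    rw [boundary_single_cons]
    refine sub_mem (Finsupp.single_mem_supported R 1 (by simp)) ?_
    exact map_mem_of_forall_single_mem (fun l' hl' ↦ by
      rw [cone_single]
      exact Finsupp.single_mem_supported R 1 (by simpa using hl')) ih

lemma boundary_boundary (c : Chain R X) : boundary (boundary c) = 0 := by
  suffices boundary ∘ₗ boundary (R := R) (X := X) = 0 from LinearMap.congr_fun this c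
  refine hom_ext fun l ↦ ?_
  induction l with
  | nil => simp [boundary_single_nil]
  | cons x l ih => simp_all [boundary_single_cons, boundary_cone]

/-- The sum of two simplices that differ by exchanging two neighbouring vertices. -/
noncomputable def swapSum (a : List X) (x y : X) (b : List X) : Chain R X :=
  Finsupp.single (a ++ x :: y :: b) 1 + Finsupp.single (a ++ y :: x :: b) 1

lemma boundary_swapSum_mem_span (a : List X) (x y : X) (b : List X) :
    boundary (swapSum (R := R) a x y b) ∈ Submodule.span R
      {c | ∃ a' b', (a' ++ x :: y :: b').Sublist (a ++ x :: y :: b) ∧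
        c = swapSum a' x y b'} := by
  induction a with
  | nil =>
    have expand : boundary (swapSum (R := R) [] x y b) =
        (cone x ∘ₗ cone y + cone y ∘ₗ cone x : Chain R X →ₗ[R] Chain R X)
          (boundary (Finsupp.single b 1)) := by
      simp only [swapSum, List.nil_append, map_add, boundary_single_cons, map_sub, cone_single,
        LinearMap.add_apply, LinearMap.comp_apply]
      abel
    rw [expand]
    refine map_mem_of_forall_single_mem (fun l hl ↦ Submodule.subset_span ?_)
      (boundary_single_mem b)
    exact ⟨[], l, by simpa using hl.1, by simp [swapSum]⟩
  | cons w a ih =>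
    have expand : boundary (swapSum (R := R) (w :: a) x y b) =
        swapSum a x y b - cone w (boundary (swapSum a x y b)) := by
      simp only [swapSum, List.cons_append, map_add, boundary_single_cons]
      abel
    rw [expand]
    refine sub_mem (Submodule.subset_span ⟨a, b, by simp, rfl⟩) ?_
    refine Submodule.map_le_iff_le_comap.2 (Submodule.span_le.2 ?_)
      (Submodule.mem_map_of_mem (f := cone w) ih)
    rintro _ ⟨a', b', hsub, rfl⟩
    exact Submodule.subset_span ⟨w :: a', b', by simpa using hsub, by simp [swapSum]⟩

end Chain

end Chains

/-! ### Smith operators and towers of primitives -/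

section SmithOperators

/-- The Smith operators of `T`, alternating between `T - 1` in odd degrees and the norm
`∑ j < p, T ^ j` in even degrees. -/
def smithOp {A : Type*} [Ring A] (T : A) (p i : ℕ) : A :=
  if Odd i then T - 1 else ∑ j ∈ Finset.range p, T ^ j

lemma smithOp_of_odd {A : Type*} [Ring A] (T : A) (p : ℕ) {i : ℕ} (hi : Odd i) :
    smithOp T p i = T - 1 :=
  if_pos hi

lemma smithOp_of_even {A : Type*} [Ring A] (T : A) (p : ℕ) {i : ℕ} (hi : Even i) :
    smithOp T p i = ∑ j ∈ Finset.range p, T ^ j :=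
  if_neg (Nat.not_odd_iff_even.2 hi)

lemma smithOp_succ_mul_smithOp {A : Type*} [Ring A] (T : A) (p i : ℕ) :
    smithOp T p (i + 1) * smithOp T p i = T ^ p - 1 := by
  rcases Nat.even_or_odd i with hi | hi
  · rw [smithOp_of_odd T p hi.add_one, smithOp_of_even T p hi, mul_geom_sum]
  · rw [smithOp_of_even T p hi.add_one, smithOp_of_odd T p hi, geom_sum_mul]

variable {R M N : Type*} [CommRing R] [AddCommGroup M] [Module R M] [AddCommGroup N] [Module R N]

lemma smithOp_apply_mem {T : Module.End R M} {S : Submodule R M} {c : M}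
    (h : ∀ j, (T ^ j) c ∈ S) (p i : ℕ) : smithOp T p i c ∈ S := by
  rcases Nat.even_or_odd i with hi | hi
  · rw [smithOp_of_even T p hi, LinearMap.sum_apply]
    exact sum_mem fun j _ ↦ h j
  · rw [smithOp_of_odd T p hi]
    exact sub_mem (by simpa using h 1) (by simpa using h 0)

lemma apply_smithOp {T : Module.End R M} {T' : Module.End R N} {f : M →ₗ[R] N}
    (hf : f ∘ₗ T = T' ∘ₗ f) (p i : ℕ) (c : M) :
    f (smithOp T p i c) = smithOp T' p i (f c) := by
  have hpow (j : ℕ) (c : M) : f ((T ^ j) c) = (T' ^ j) (f c) := by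
    rw [Module.End.pow_apply, Module.End.pow_apply]
    exact (Function.Semiconj.iterate_right (f := f) (LinearMap.congr_fun hf) j).eq c
  rcases Nat.even_or_odd i with hi | hi
  · simp [smithOp_of_even _ p hi, hpow]
  · simpa [smithOp_of_odd _ p hi] using hpow 1 c

section Primitive

variable {T Q : Module.End R M} {p : ℕ} {D G : Submodule R M} {ω : M →ₗ[R] N}

lemma pow_apply_mem (hT : ∀ c ∈ G, T c ∈ G) (j : ℕ) {c : M} (hc : c ∈ G) : (T ^ j) c ∈ G := by
  rw [Module.End.pow_apply]
  exact Set.MapsTo.iterate (s := (G : Set M)) hT j hc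

lemma norm_comp_eq_of_invariant (hTG : ∀ c ∈ G, T c ∈ G) (hQG : ∀ c ∈ G, Q c ∈ G)
    (hdec : ∀ c ∈ G, ∑ j ∈ Finset.range p, (T ^ (p - j)) (Q ((T ^ j) c)) - c ∈ D)
    (hωD : ∀ c ∈ D, ω c = 0) (hω : ∀ c ∈ G, ω (T c) = ω c) {c : M} (hc : c ∈ G) :
    ω (Q ((∑ j ∈ Finset.range p, T ^ j) c)) = ω c := by
  have hωpow (j : ℕ) {c : M} (hc : c ∈ G) : ω ((T ^ j) c) = ω c := by
    induction j with
    | zero => simp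
    | succ j ih => rw [pow_succ', Module.End.mul_apply, hω _ (pow_apply_mem hTG j hc), ih]
  calc ω (Q ((∑ j ∈ Finset.range p, T ^ j) c))
      = ∑ j ∈ Finset.range p, ω ((T ^ (p - j)) (Q ((T ^ j) c))) := by
        simp only [LinearMap.sum_apply, map_sum]
        exact Finset.sum_congr rfl fun j _ ↦
          (hωpow _ (hQG _ (pow_apply_mem hTG j hc))).symm
    _ = ω c := by rw [← map_sum, ← sub_eq_zero, ← map_sub, hωD _ (hdec c hc)]

lemma sum_pow_sub_eq_sum_pow (hT : T ^ p = 1) :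
    ∑ j ∈ Finset.range p, T ^ (p - j) = ∑ j ∈ Finset.range p, T ^ j := by
  have shift := (Finset.sum_range_succ (fun j ↦ T ^ j) p).symm.trans
    (Finset.sum_range_succ' (fun j ↦ T ^ j) p)
  rw [hT, pow_zero] at shift
  rw [add_right_cancel shift, ← Finset.sum_range_reflect]
  refine Finset.sum_congr rfl fun j hj ↦ ?_
  congr 1
  have := Finset.mem_range.1 hj
  omega

lemma telescope_comp_sub_eq (hT : T ^ p = 1) (hQG : ∀ c ∈ G, Q c ∈ G)
    (hdec : ∀ c ∈ G, ∑ j ∈ Finset.range p, (T ^ (p - j)) (Q ((T ^ j) c)) - c ∈ D)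
    (hωD : ∀ c ∈ D, ω c = 0) (hω : ∀ c ∈ G, ω ((∑ j ∈ Finset.range p, T ^ j) c) = 0)
    {c : M} (hc : c ∈ G) :
    ∑ j ∈ Finset.range p, ω ((T ^ (p - j)) (Q ((∑ m ∈ Finset.range j, T ^ m) ((T - 1) c)))) =
      ω c := by
  have hnorm : ∑ j ∈ Finset.range p, ω ((T ^ (p - j)) (Q c)) = 0 := by
    rw [← map_sum, ← LinearMap.sum_apply, sum_pow_sub_eq_sum_pow hT, hω _ (hQG c hc)]
  calc _ = ∑ j ∈ Finset.range p, (ω ((T ^ (p - j)) (Q ((T ^ j) c))) -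
          ω ((T ^ (p - j)) (Q c))) := by
        refine Finset.sum_congr rfl fun j _ ↦ ?_
        rw [← Module.End.mul_apply (∑ m ∈ Finset.range j, T ^ m), geom_sum_mul]
        simp
    _ = ω c := by
        rw [Finset.sum_sub_distrib, hnorm, sub_zero, ← map_sum, ← sub_eq_zero, ← map_sub,
          hωD _ (hdec c hc)]

/-- `Q` plays the role of the projection onto a fundamental domain for the action of `T`, so that
modulo `D` the module `G` is induced and its Tate cohomology vanishes. -/
lemma exists_comp_smithOp_succ_eq (hT : T ^ p = 1) (hTD : ∀ c ∈ D, T c ∈ D)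
    (hQD : ∀ c ∈ D, Q c ∈ D) (hTG : ∀ c ∈ G, T c ∈ G) (hQG : ∀ c ∈ G, Q c ∈ G)
    (hdec : ∀ c ∈ G, ∑ j ∈ Finset.range p, (T ^ (p - j)) (Q ((T ^ j) c)) - c ∈ D)
    (hωD : ∀ c ∈ D, ω c = 0) {i : ℕ} (hω : ∀ c ∈ G, ω (smithOp T p i c) = 0) :
    ∃ β : M →ₗ[R] N, (∀ c ∈ D, β c = 0) ∧ ∀ c ∈ G, β (smithOp T p (i + 1) c) = ω c := by
  rcases Nat.even_or_odd i with hi | hi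
  · rw [smithOp_of_even T p hi] at hω
    rw [smithOp_of_odd T p hi.add_one]
    refine ⟨∑ j ∈ Finset.range p, ω ∘ₗ (T ^ (p - j)) ∘ₗ Q ∘ₗ ∑ m ∈ Finset.range j, T ^ m,
      fun c hc ↦ ?_, fun c hc ↦ ?_⟩
    · simp only [LinearMap.sum_apply, LinearMap.comp_apply]
      refine Finset.sum_eq_zero fun j _ ↦ hωD _ (pow_apply_mem hTD _ (hQD _ ?_))
      exact sum_mem fun m _ ↦ pow_apply_mem hTD m hc
    · simpa only [LinearMap.sum_apply, LinearMap.comp_apply] using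
        telescope_comp_sub_eq hT hQG hdec hωD hω hc
  · rw [smithOp_of_odd T p hi] at hω
    rw [smithOp_of_even T p hi.add_one]
    have hinv (c : M) (hc : c ∈ G) : ω (T c) = ω c := by
      simpa [sub_eq_zero] using hω c hc
    exact ⟨ω ∘ₗ Q, fun c hc ↦ hωD _ (hQD c hc),
      fun c hc ↦ norm_comp_eq_of_invariant hTG hQG hdec hωD hinv hc⟩

end Primitive

/-- `SmithTower T p d P z i c` says that `c` is the `i`-th term of a sequence `c₀, c₁, …` in `P`
with `d c₀ = z` and `d cₖ₊₁ = smithOp T p (k + 1) cₖ`. -/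
inductive SmithTower (T : Module.End R M) (p : ℕ) (d : Module.End R M) (P : Submodule R M)
    (z : M) : ℕ → M → Prop
  | zero {c : M} (hc : c ∈ P) (hd : d c = z) : SmithTower T p d P z 0 c
  | succ {i : ℕ} {c c' : M} (h : SmithTower T p d P z i c) (hc' : c' ∈ P)
      (hd : d c' = smithOp T p (i + 1) c) : SmithTower T p d P z (i + 1) c'

namespace SmithTower

variable {T d : Module.End R M} {T' d' : Module.End R N} {p : ℕ} {P : Submodule R M}
  {P' : Submodule R N} {z : M} {i : ℕ} {c : M}

lemma mem (h : SmithTower T p d P z i c) : c ∈ P := by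
  cases h <;> assumption

lemma map {f : M →ₗ[R] N} (hT : f ∘ₗ T = T' ∘ₗ f) (hd : f ∘ₗ d = d' ∘ₗ f)
    (hP : ∀ c ∈ P, f c ∈ P') (h : SmithTower T p d P z i c) :
    SmithTower T' p d' P' (f z) i (f c) := by
  have hd' (c : M) : d' (f c) = f (d c) := (LinearMap.congr_fun hd c).symm
  induction h with
  | zero hc hz => exact .zero (hP _ hc) (by rw [hd', hz])
  | succ _ hc' hd ih => exact .succ ih (hP _ hc') (by rw [hd', hd, apply_smithOp hT])

lemma d_smithOp_eq_zero (hT : T ^ p = 1) (hTd : d ∘ₗ T = T ∘ₗ d) (hz : T z = z)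
    (h : SmithTower T p d P z i c) : d (smithOp T p (i + 1) c) = 0 := by
  rw [apply_smithOp hTd]
  cases h with
  | zero hc hz' => simp [hz', hz, smithOp_of_odd]
  | succ h hc hd =>
    rw [hd, ← Module.End.mul_apply, smithOp_succ_mul_smithOp, hT]
    simp

end SmithTower

end SmithOperators

/-! ### Equivariant labels and their index -/

section Labels

open Chain

/-- Labels of an equivariant colouring: `inl v` is a label fixed by the rotation, and `inr (k, a)`
is a freely rotated label of kind `k` and angle `a`. -/
abbrev Label (V ι : Type*) (p : ℕ) := V ⊕ ι × ZMod p

namespace Label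

variable {V ι : Type*} {p : ℕ}

/-- The rotation of labels, which adds `1` to all angles. -/
def rot : Label V ι p → Label V ι p :=
  Sum.map id (Prod.map id (· + 1))

/-- The kind of a label; all fixed labels share the kind `none`. -/
def kind : Label V ι p → Option ι :=
  Sum.elim (fun _ ↦ none) (fun x ↦ some x.1)

lemma rot_iterate (j : ℕ) :
    (rot : Label V ι p → Label V ι p)^[j] = Sum.map id (Prod.map id (· + (j : ZMod p))) := by
  induction j with
  | zero => ext (v | ⟨k, a⟩) <;> simp
  | succ j ih =>
    rw [Function.iterate_succ', ih]
    ext (v | ⟨k, a⟩) <;> simp [rot, add_assoc]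

lemma rot_iterate_self : (rot : Label V ι p → Label V ι p)^[p] = id := by
  rw [rot_iterate]
  ext (v | ⟨k, a⟩) <;> simp

@[simp] lemma kind_rot (x : Label V ι p) : kind (rot x) = kind x := by
  rcases x with v | ⟨k, a⟩ <;> rfl

@[simp] lemma kind_rot_iterate (j : ℕ) (x : Label V ι p) : kind (rot^[j] x) = kind x := by
  rw [rot_iterate]
  rcases x with v | ⟨k, a⟩ <;> rfl

@[simp] lemma rot_inl (v : V) : rot (.inl v : Label V ι p) = .inl v := rfl

lemma rot_eq_inl_iff {x : Label V ι p} {v : V} : rot x = .inl v ↔ x = .inl v := by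
  rcases x with w | ⟨k, a⟩ <;> simp [rot]

variable {W : Set V}

/-- The simplices on which no two different labels have the same kind and whose fixed labels
belong to `W`. -/
def admissible (W : Set V) : Set (List (Label V ι p)) :=
  {l | (∀ x ∈ l, ∀ y ∈ l, kind x = kind y → x = y) ∧ ∀ v, .inl v ∈ l → v ∈ W}

lemma admissible_of_subset {l l' : List (Label V ι p)} (hl : l ∈ admissible W) (h : l' ⊆ l) :
    l' ∈ admissible W :=
  ⟨fun x hx y hy ↦ hl.1 x (h hx) y (h hy), fun v hv ↦ hl.2 v (h hv)⟩

lemma map_rot_mem_admissible {l : List (Label V ι p)} (hl : l ∈ admissible W) :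
    l.map rot ∈ admissible W := by
  refine ⟨List.forall_mem_map.2 fun x hx ↦ List.forall_mem_map.2 fun y hy hxy ↦ ?_,
    fun v hv ↦ ?_⟩
  · rw [hl.1 x hx y hy (by simpa using hxy)]
  · obtain ⟨x, hx, hxv⟩ := List.mem_map.1 hv
    exact hl.2 v (rot_eq_inl_iff.1 hxv ▸ hx)

/-- The simplices whose rotated labels of least kind have angle `0`. -/
def fundamentalDomain [LinearOrder ι] : Set (List (Label V ι p)) :=
  {l | ∃ k, .inr (k, 0) ∈ l ∧ ∀ x ∈ l, ∀ k', kind x = some k' → k ≤ k'}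

lemma exists_kind_eq_some_le [LinearOrder ι] {l : List (Label V ι p)}
    (hl : ¬ ∀ x ∈ l, kind x = none) :
    ∃ k a, .inr (k, a) ∈ l ∧ ∀ x ∈ l, ∀ k', kind x = some k' → k ≤ k' := by
  have hne : (l.filterMap kind).toFinset.Nonempty := by
    push Not at hl
    obtain ⟨x, hx, hxk⟩ := hl
    obtain ⟨k, hk⟩ := Option.ne_none_iff_exists'.1 hxk
    exact ⟨k, by simpa only [List.mem_toFinset, List.mem_filterMap] using ⟨x, hx, hk⟩⟩
  obtain ⟨k, hk, hmin⟩ := Finset.exists_min_image _ id hne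
  simp only [List.mem_toFinset, List.mem_filterMap, id] at hk hmin
  obtain ⟨x, hx, hxk⟩ := hk
  rcases x with v | ⟨k', a⟩
  · simp [kind] at hxk
  · obtain rfl : k' = k := by simpa [kind] using hxk
    exact ⟨k', a, hx, fun y hy k'' hk'' ↦ hmin k'' ⟨y, hy, hk''⟩⟩

lemma exists_map_rot_mem_fundamentalDomain_iff [LinearOrder ι] {l : List (Label V ι p)}
    (hl : l ∈ admissible W) (hl' : ¬ ∀ x ∈ l, kind x = none) :
    ∃ a : ZMod p, ∀ j : ℕ, l.map rot^[j] ∈ fundamentalDomain ↔ a + j = 0 := by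
  obtain ⟨k, a, hka, hmin⟩ := exists_kind_eq_some_le hl'
  refine ⟨a, fun j ↦ ⟨?_, fun haj ↦ ⟨k, ?_, ?_⟩⟩⟩
  · rintro ⟨k', hk', hmin'⟩
    obtain ⟨x, hx, hxk'⟩ := List.mem_map.1 hk'
    have hkind : kind x = some k' := by rw [← kind_rot_iterate j x, hxk']; rfl
    obtain rfl : k' = k := le_antisymm
      (hmin' (rot^[j] (.inr (k, a))) (List.mem_map_of_mem hka) k
        (by rw [kind_rot_iterate]; rfl))
      (hmin x hx k' hkind)
    obtain rfl := hl.1 x hx (.inr (k', a)) hka hkind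
    simpa [rot_iterate] using hxk'
  · exact List.mem_map.2 ⟨.inr (k, a), hka, by simp [rot_iterate, haj]⟩
  · exact List.forall_mem_map.2 fun x hx k' hk' ↦ hmin x hx k' (by simpa using hk')

variable {R : Type*} [CommRing R]

/-- The generators of `Label.degenerate`. -/
inductive DegenerateGenerator (R : Type*) [CommRing R] (W : Set V) (d : ℕ) :
    Chain R (Label V ι p) → Prop
  | swap {a b : List (Label V ι p)} {x y : Label V ι p} (h : a ++ x :: y :: b ∈ admissible W) :
      DegenerateGenerator R W d (swapSum a x y b)
  | fixed {l : List (Label V ι p)} (h : l ∈ admissible W) (hl : ∀ x ∈ l, kind x = none) :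
      DegenerateGenerator R W d (Finsupp.single l 1)
  | short {l : List (Label V ι p)} (hl : l.length < d) :
      DegenerateGenerator R W d (Finsupp.single l 1)

/-- The relations that make admissible chains alternating, and kill the simplices with fixed
labels only and those with fewer than `d` vertices. -/
noncomputable def degenerate (R : Type*) [CommRing R] (W : Set V) (d : ℕ) :
    Submodule R (Chain R (Label V ι p)) :=
  Submodule.span R {c | DegenerateGenerator R W d c}

lemma degenerate_le_iff {d : ℕ} {S : Submodule R (Chain R (Label V ι p))} :
    degenerate R W d ≤ S ↔ ∀ c, DegenerateGenerator R W d c → c ∈ S :=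
  Submodule.span_le

lemma boundary_mem_degenerate {d : ℕ} {c : Chain R (Label V ι p)}
    (hc : c ∈ degenerate R W (d + 1)) : boundary c ∈ degenerate R W d := by
  refine degenerate_le_iff (S := (degenerate R W d).comap boundary).2 (fun c hc ↦ ?_) hc
  cases hc with
  | @swap a b x y h =>
    rw [Submodule.mem_comap]
    refine Submodule.span_le.2 ?_ (boundary_swapSum_mem_span a x y b)
    rintro _ ⟨a', b', hsub, rfl⟩
    exact Submodule.subset_span (.swap (admissible_of_subset h hsub.subset))
  | @fixed l h hl =>
    refine supported_le_iff.2 (fun l' hl' ↦ Submodule.subset_span ?_) (boundary_single_mem l)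
    exact .fixed (admissible_of_subset h hl'.1.subset) fun x hx ↦ hl x (hl'.1.subset hx)
  | @short l hl =>
    refine supported_le_iff.2 (fun l' hl' ↦ Submodule.subset_span (.short ?_))
      (boundary_single_mem l)
    exact Nat.succ_lt_succ_iff.1 (hl'.2.trans_lt hl)

lemma map_rot_mem_degenerate {d : ℕ} {c : Chain R (Label V ι p)}
    (hc : c ∈ degenerate R W d) : map rot c ∈ degenerate R W d := by
  refine (degenerate_le_iff (S := (degenerate R W d).comap (map rot))).2 (fun c hc ↦ ?_) hc
  rw [Submodule.mem_comap]
  cases hc with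
  | swap h =>
    have := map_rot_mem_admissible h
    simp only [swapSum, map_add, map_single, List.map_append, List.map_cons] at this ⊢
    exact Submodule.subset_span (.swap this)
  | fixed h hl =>
    rw [map_single]
    exact Submodule.subset_span (.fixed (map_rot_mem_admissible h)
      (List.forall_mem_map.2 fun x hx ↦ by simpa using hl x hx))
  | short hl =>
    rw [map_single]
    exact Submodule.subset_span (.short (by simpa using hl))

section Cut

variable [LinearOrder ι]

open Classical in
/-- The projection of chains onto the fundamental domain of the rotation. -/
noncomputable def cut : Module.End R (Chain R (Label V ι p)) :=
  Finsupp.linearCombination R fun l ↦ if l ∈ fundamentalDomain then Finsupp.single l 1 else 0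

open Classical in
lemma cut_single (l : List (Label V ι p)) :
    cut (Finsupp.single l (1 : R)) = if l ∈ fundamentalDomain then Finsupp.single l 1 else 0 := by
  simp [cut]

lemma mem_fundamentalDomain_of_perm {l l' : List (Label V ι p)} (h : l.Perm l')
    (hl : l ∈ fundamentalDomain) : l' ∈ fundamentalDomain := by
  obtain ⟨k, hk, hmin⟩ := hl
  exact ⟨k, h.subset hk, fun x hx ↦ hmin x (h.symm.subset hx)⟩

lemma cut_mem_degenerate {d : ℕ} {c : Chain R (Label V ι p)} (hc : c ∈ degenerate R W d) :
    cut c ∈ degenerate R W d := by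
  refine (degenerate_le_iff (S := (degenerate R W d).comap cut)).2 (fun c hc ↦ ?_) hc
  rw [Submodule.mem_comap]
  have hgen := Submodule.subset_span (R := R) hc
  cases hc with
  | @swap a b x y h =>
    have hperm : (a ++ x :: y :: b).Perm (a ++ y :: x :: b) := (List.Perm.swap y x b).append_left a
    rw [swapSum, map_add, cut_single, cut_single]
    by_cases hmem : a ++ x :: y :: b ∈ fundamentalDomain
    · rw [if_pos hmem, if_pos (mem_fundamentalDomain_of_perm hperm hmem)]
      exact hgen
    · rw [if_neg hmem, if_neg (mt (mem_fundamentalDomain_of_perm hperm.symm) hmem), add_zero]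
      exact zero_mem _
  | fixed h hl =>
    rw [cut_single]
    split_ifs
    exacts [hgen, zero_mem _]
  | short hl =>
    rw [cut_single]
    split_ifs
    exacts [hgen, zero_mem _]

lemma cut_mem_supported {P : Set (List (Label V ι p))} {c : Chain R (Label V ι p)}
    (hc : c ∈ Finsupp.supported R R P) : cut c ∈ Finsupp.supported R R P := by
  refine map_mem_of_forall_single_mem (fun l hl ↦ ?_) hc
  rw [cut_single]
  split_ifs
  exacts [Finsupp.single_mem_supported R 1 hl, zero_mem _]

lemma sum_range_ite_add_natCast_eq_zero [NeZero p] {M : Type*} [AddCommMonoid M] (a : ZMod p)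
    (c : M) : ∑ j ∈ Finset.range p, (if a + (j : ZMod p) = 0 then c else 0) = c := by
  have hiff : ∀ j ∈ Finset.range p, a + (j : ZMod p) = 0 ↔ (-a).val = j := fun j hj ↦ by
    rw [add_comm, add_eq_zero_iff_eq_neg, ← (ZMod.val_injective p).eq_iff, ZMod.val_natCast,
      Nat.mod_eq_of_lt (Finset.mem_range.1 hj), eq_comm]
  rw [Finset.sum_congr rfl fun j hj ↦ if_congr (hiff j hj) rfl rfl, Finset.sum_ite_eq,
    if_pos (Finset.mem_range.2 (ZMod.val_lt _))]

lemma sum_map_rot_cut_sub_mem_degenerate [NeZero p] {d : ℕ} {c : Chain R (Label V ι p)}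
    (hc : c ∈ Finsupp.supported R R (admissible W)) :
    ∑ j ∈ Finset.range p, (map rot ^ (p - j)) (cut ((map rot ^ j) c)) - c ∈
      degenerate R W d := by
  let average : Module.End R (Chain R (Label V ι p)) :=
    ∑ j ∈ Finset.range p, map rot ^ (p - j) * cut * map rot ^ j - 1
  suffices average c ∈ degenerate R W d by simpa [average, LinearMap.sum_apply] using this
  refine map_mem_of_forall_single_mem (fun l hl ↦ ?_) hc
  simp only [average, LinearMap.sub_apply, LinearMap.sum_apply, Module.End.mul_apply,
    Module.End.one_apply]
  by_cases hfix : ∀ x ∈ l, kind x = none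
  · have hmem : Finsupp.single l (1 : R) ∈ degenerate R W d :=
      Submodule.subset_span (.fixed hl hfix)
    have hrot (j : ℕ) {c : Chain R (Label V ι p)} (hc : c ∈ degenerate R W d) :=
      pow_apply_mem (fun _ ↦ map_rot_mem_degenerate) j hc
    exact sub_mem (sum_mem fun j _ ↦ hrot _ (cut_mem_degenerate (hrot j hmem))) hmem
  · obtain ⟨a, ha⟩ := exists_map_rot_mem_fundamentalDomain_iff hl hfix
    rw [sub_eq_zero_of_eq]
    · exact zero_mem _
    refine Eq.trans (Finset.sum_congr rfl fun j hj ↦ ?_)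
      (sum_range_ite_add_natCast_eq_zero a (Finsupp.single l (1 : R)))
    rw [map_pow_eq_map_iterate, map_pow_eq_map_iterate, map_single, cut_single]
    simp only [ha]
    split_ifs
    · rw [map_single, List.map_map, ← Function.iterate_add,
        Nat.sub_add_cancel (Finset.mem_range.1 hj).le, rot_iterate_self, List.map_id]
    · rw [map_zero]

end Cut

lemma single_mem_degenerate_iff_of_perm {d : ℕ} {l l' : List (Label V ι p)} (h : l.Perm l')
    (a : List (Label V ι p)) (hl : a ++ l ∈ admissible W) :
    Finsupp.single (a ++ l) (1 : R) ∈ degenerate R W d ↔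
      Finsupp.single (a ++ l') 1 ∈ degenerate R W d := by
  induction h generalizing a with
  | nil => rfl
  | cons x _ ih => simpa using ih (a ++ [x]) (by simpa using hl)
  | swap x y l =>
    have hswap : swapSum a y x l ∈ degenerate R W d := Submodule.subset_span (.swap hl)
    exact ⟨fun h ↦ (Submodule.add_mem_iff_right _ h).1 hswap,
      fun h ↦ (Submodule.add_mem_iff_left _ h).1 hswap⟩
  | trans h₁ _ ih₁ ih₂ =>
    exact (ih₁ a hl).trans (ih₂ a (admissible_of_subset hl (h₁.symm.append_left a).subset))

lemma supported_admissible_le_degenerate [Fintype ι] (h2 : IsUnit (2 : R)) {d : ℕ}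
    (hd : Fintype.card ι + 1 < d) :
    Finsupp.supported R R (admissible W) ≤ degenerate (p := p) (ι := ι) R W d := by
  refine supported_le_iff.2 fun l hl ↦ ?_
  rcases lt_or_ge l.length d with hlen | hlen
  · exact Submodule.subset_span (.short hlen)
  have hdup : ¬ l.Nodup := fun hnodup ↦ by
    have := ((List.nodup_map_iff_inj_on hnodup).2 hl.1).length_le_card
    simp only [List.length_map, Fintype.card_option] at this
    omega
  obtain ⟨x, hx⟩ : ∃ x, [x, x].Sublist l := by
    rw [List.nodup_iff_sublist] at hdup
    push Not at hdup
    exact hdup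
  obtain ⟨m, hm⟩ := hx.exists_perm_append
  refine (single_mem_degenerate_iff_of_perm hm [] hl).2 ?_
  have hswap : swapSum [] x x m ∈ degenerate R W d :=
    Submodule.subset_span (.swap (admissible_of_subset hl hm.symm.subset))
  rw [swapSum, ← two_smul R] at hswap
  exact (Submodule.smul_mem_iff_of_isUnit _ h2).1 hswap

variable {N : Type*} [AddCommGroup N] [Module R N]

lemma exists_functional_of_smithTower [NeZero p] (hp : (p : R) = 0)
    {α : Chain R (Label V ι p) →ₗ[R] N} (hα : α ∘ₗ map rot = α)
    (hαD : ∀ c ∈ degenerate R W 0, α (boundary c) = 0) {z c : Chain R (Label V ι p)} {i : ℕ}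
    (h : SmithTower (map rot) p boundary (Finsupp.supported R R (admissible W)) z i c) :
    ∃ ω : Chain R (Label V ι p) →ₗ[R] N, (∀ c ∈ degenerate R W i, ω c = 0) ∧
      (∀ c, ω (boundary c) = 0) ∧
      (∀ c ∈ Finsupp.supported R R (admissible W), ω (smithOp (map rot) p i c) = 0) ∧
      ω c = α z := by
  let _ : LinearOrder ι := IsWellOrder.linearOrder WellOrderingRel
  have hperiod : map (R := R) (rot : Label V ι p → Label V ι p) ^ p = 1 := by
    rw [map_pow_eq_map_iterate, rot_iterate_self, map_id]; rfl
  have hrot {c : Chain R (Label V ι p)} (hc : c ∈ Finsupp.supported R R (admissible W)) :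
      map rot c ∈ Finsupp.supported R R (admissible W) :=
    map_mem_of_forall_single_mem (fun l hl ↦ by
      rw [map_single]
      exact Finsupp.single_mem_supported R 1 (map_rot_mem_admissible hl)) hc
  have hboundary {c : Chain R (Label V ι p)} (hc : c ∈ Finsupp.supported R R (admissible W)) :
      boundary c ∈ Finsupp.supported R R (admissible W) :=
    map_mem_of_forall_single_mem (fun l hl ↦ Finsupp.supported_mono
      (fun l' hl' ↦ admissible_of_subset hl hl'.1.subset) (boundary_single_mem l)) hc
  induction h with
  | zero _ hz =>
    refine ⟨α ∘ₗ boundary, hαD, fun c ↦ by simp [boundary_boundary], fun c _ ↦ ?_, by simp [hz]⟩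
    have hpow (j : ℕ) (c : Chain R (Label V ι p)) : α ((map rot ^ j) c) = α c := by
      induction j generalizing c with
      | zero => simp
      | succ j ih => rw [pow_succ, Module.End.mul_apply, ih]; exact LinearMap.congr_fun hα c
    rw [LinearMap.comp_apply, apply_smithOp (boundary_comp_map rot),
      smithOp_of_even _ p Even.zero]
    simp [hpow, hp, ← Nat.cast_smul_eq_nsmul R]
  | @succ i c c' h _ hd ih =>
    obtain ⟨ω, hωD, hω, hωs, hωz⟩ := ih
    obtain ⟨β, hβD, hβ⟩ := exists_comp_smithOp_succ_eq hperiod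
      (fun _ ↦ map_rot_mem_degenerate) (fun _ ↦ cut_mem_degenerate) (fun _ ↦ hrot)
      (fun _ ↦ cut_mem_supported) (fun _ ↦ sum_map_rot_cut_sub_mem_degenerate) hωD hωs
    refine ⟨β ∘ₗ boundary, fun c hc ↦ hβD _ (boundary_mem_degenerate hc),
      fun c ↦ by simp [boundary_boundary], fun c hc ↦ ?_, ?_⟩
    · rw [LinearMap.comp_apply, apply_smithOp (boundary_comp_map rot), hβ _ (hboundary hc), hω]
    · rw [LinearMap.comp_apply, hd, hβ _ h.mem, hωz]

/-- In degrees above the number of kinds there are no nondegenerate admissible chains, so the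
functional transported along the tower vanishes. -/
theorem apply_eq_zero_of_smithTower [NeZero p] [Fintype ι] (hp : (p : R) = 0)
    (h2 : IsUnit (2 : R)) {α : Chain R (Label V ι p) →ₗ[R] N} (hα : α ∘ₗ map rot = α)
    (hαD : ∀ c ∈ degenerate R W 0, α (boundary c) = 0) {z c : Chain R (Label V ι p)} {m : ℕ}
    (hm : Fintype.card ι + 1 < m)
    (h : SmithTower (map rot) p boundary (Finsupp.supported R R (admissible W)) z m c) :
    α z = 0 := by
  obtain ⟨ω, hωD, -, -, hωz⟩ := exists_functional_of_smithTower hp hα hαD h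
  rw [← hωz, hωD c (supported_admissible_le_degenerate h2 hm h.mem)]

end Label

end Labels

/-! ### Prisms and the contraction of small chains -/

namespace Chain

section Prism

variable {R X Y : Type*} [CommRing R]

/-- The prism operator on simplices, triangulating the product of a simplex with an interval. -/
noncomputable def simplexPrism (f g : X → Y) : List X → Chain R Y
  | [] => 0
  | x :: l => Finsupp.single (f x :: g x :: l.map g) 1 - cone (f x) (simplexPrism f g l)

/-- The prism operator, a chain homotopy between the maps induced by `f` and `g`. -/
noncomputable def prism (f g : X → Y) : Chain R X →ₗ[R] Chain R Y :=
  Finsupp.linearCombination R (simplexPrism f g)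

lemma prism_single (f g : X → Y) (l : List X) :
    prism f g (Finsupp.single l (1 : R)) = simplexPrism f g l := by
  simp [prism]

lemma boundary_prism_add_prism_boundary (f g : X → Y) (c : Chain R X) :
    boundary (prism f g c) + prism f g (boundary c) = map g c - map f c := by
  have prism_cone (x : X) (c : Chain R X) :
      prism f g (cone x c) = cone (f x) (cone (g x) (map g c)) - cone (f x) (prism f g c) := by
    suffices prism f g ∘ₗ cone x =
        cone (f x) ∘ₗ cone (g x) ∘ₗ map (R := R) g - cone (f x) ∘ₗ prism f g from
      LinearMap.congr_fun this c
    exact hom_ext fun l ↦ by simp [prism_single, simplexPrism]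
  suffices boundary ∘ₗ prism f g + prism f g ∘ₗ boundary = map (R := R) g - map f from
    LinearMap.congr_fun this c
  refine hom_ext fun l ↦ ?_
  induction l with
  | nil => simp [prism_single, simplexPrism, boundary_single_nil]
  | cons x l ih =>
    simp only [LinearMap.add_apply, LinearMap.sub_apply, LinearMap.comp_apply] at ih ⊢
    have ih' := congrArg (cone (f x)) ih
    simp only [map_add, map_sub, map_single, cone_single] at ih'
    rw [boundary_single_cons, prism_single, simplexPrism, ← prism_single]
    have map_boundary : map g (boundary (Finsupp.single l (1 : R))) =
        boundary (Finsupp.single (l.map g) 1) := by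
      rw [← boundary_map, map_single]
    simp only [map_sub, boundary_single_cons, boundary_cone, prism_cone, cone_single, map_single,
      List.map_cons, map_boundary]
    rw [← sub_eq_zero] at ih' ⊢
    rw [← ih']
    abel

lemma prism_single_mem (f g : X → Y) (l : List X) :
    prism f g (Finsupp.single l (1 : R)) ∈ Finsupp.supported R R
      {l' | ∀ y ∈ l', ∃ x ∈ l, ∃ u ∈ ({f, g} : Set (X → Y)), y = u x} := by
  rw [prism_single]
  induction l with
  | nil => simp [simplexPrism]
  | cons x l ih =>
    rw [simplexPrism]
    refine sub_mem (Finsupp.single_mem_supported R 1 ?_)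
      (map_mem_of_forall_single_mem (fun l' hl' ↦ ?_) ih)
    · simpa using fun a ha ↦ Or.inr ⟨a, ha, Or.inr rfl⟩
    · rw [cone_single]
      refine Finsupp.single_mem_supported R 1 (List.forall_mem_cons.2 ⟨⟨x, by simp⟩, ?_⟩)
      intro y hy
      obtain ⟨a, ha, h⟩ := hl' y hy
      exact ⟨a, List.mem_cons_of_mem x ha, h⟩

end Prism

section Small

variable {R E F : Type*} [CommRing R] [SeminormedAddCommGroup E] [SeminormedAddCommGroup F]

/-- The simplices in the closed ball of radius `r` whose vertices have distances less than `ε`. -/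
def small (r ε : ℝ) : Set (List E) :=
  {l | ∀ x ∈ l, ‖x‖ ≤ r ∧ ∀ y ∈ l, dist x y < ε}

lemma prism_mem_supported_small {f g : E → F} {r ε δ : ℝ}
    (hnorm : ∀ u ∈ ({f, g} : Set (E → F)), ∀ x, ‖u x‖ ≤ ‖x‖)
    (hdist : ∀ u ∈ ({f, g} : Set (E → F)), ∀ x y, dist (u x) (u y) ≤ dist x y) (hδ : 0 ≤ δ)
    (hfg : ∀ x, ‖x‖ ≤ r → dist (f x) (g x) ≤ δ) {c : Chain R E}
    (hc : c ∈ Finsupp.supported R R (small r ε)) :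
    prism f g c ∈ Finsupp.supported R R (small r (ε + δ)) := by
  refine map_mem_of_forall_single_mem (fun l hl ↦ ?_) hc
  refine Finsupp.supported_mono (fun l' hl' y hy ↦ ?_) (prism_single_mem f g l)
  obtain ⟨x, hx, u, hu, rfl⟩ := hl' y hy
  refine ⟨(hnorm u hu x).trans (hl x hx).1, fun y' hy' ↦ ?_⟩
  obtain ⟨x', hx', v, hv, rfl⟩ := hl' y' hy'
  have huv : dist (u x') (v x') ≤ δ := by
    have hfg' := hfg x' (hl x' hx').1
    rcases hu with rfl | rfl <;> rcases hv with rfl | rfl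
    exacts [by rwa [dist_self], hfg', by rwa [dist_comm], by rwa [dist_self]]
  calc dist (u x) (v x') ≤ dist (u x) (u x') + dist (u x') (v x') := dist_triangle _ _ _
    _ < ε + δ := add_lt_add_of_lt_of_le ((hdist u hu x x').trans_lt ((hl x hx).2 x' hx')) huv

lemma exists_map_mem_small [ProperSpace E] {f : E → F} (hf : Continuous f) (r : ℝ) :
    ∃ r' ≥ 0, ∀ ε' > 0, ∃ ε > 0, ∀ l ∈ small r ε, l.map f ∈ small r' ε' := by
  have hK := isCompact_closedBall (0 : E) r
  obtain ⟨r', hr', hbound⟩ := (hK.image hf).isBounded.exists_pos_norm_le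
  refine ⟨r', hr'.le, fun ε' hε' ↦ ?_⟩
  obtain ⟨ε, hε, huc⟩ := Metric.uniformContinuousOn_iff.1
    (hK.uniformContinuousOn_of_continuous hf.continuousOn) ε' hε'
  refine ⟨ε, hε, fun l hl ↦ List.forall_mem_map.2 fun x hx ↦
    ⟨hbound _ (Set.mem_image_of_mem f ?_), List.forall_mem_map.2 fun y hy ↦
      huc x ?_ y ?_ ((hl x hx).2 y hy)⟩⟩
  exacts [mem_closedBall_zero_iff.2 (hl x hx).1, mem_closedBall_zero_iff.2 (hl x hx).1,
    mem_closedBall_zero_iff.2 (hl y hy).1]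

lemma exists_pow_map_mem_supported_small [ProperSpace E] {p : ℕ} [NeZero p] {t : E → E}
    (ht : Continuous t) (htp : t^[p] = id) (r : ℝ) :
    ∃ r' ≥ 0, ∀ ε' > 0, ∃ ε > 0, ∀ c ∈ Finsupp.supported R R (small r ε), ∀ j,
      (map t ^ j) c ∈ Finsupp.supported R R (small r' ε') := by
  let orbit (x : E) (j : Fin p) : E := t^[j] x
  have horbit : Continuous orbit := continuous_pi fun j ↦ ht.iterate j
  obtain ⟨r', hr', h⟩ := exists_map_mem_small horbit r
  refine ⟨r', hr', fun ε' hε' ↦ ?_⟩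
  obtain ⟨ε, hε, h⟩ := h ε' hε'
  refine ⟨ε, hε, fun c hc j ↦ ?_⟩
  have hperiod : map (R := R) t ^ p = 1 := by rw [map_pow_eq_map_iterate, htp, map_id]; rfl
  rw [pow_eq_pow_mod j hperiod, map_pow_eq_map_iterate]
  refine map_mem_of_forall_single_mem (fun l hl ↦ ?_) hc
  rw [map_single]
  let k : Fin p := ⟨j % p, Nat.mod_lt j (NeZero.pos p)⟩
  refine Finsupp.single_mem_supported R 1 (List.forall_mem_map.2 fun x hx ↦ ?_)
  have hx' := h l hl (orbit x) (List.mem_map_of_mem hx)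
  exact ⟨(norm_le_pi_norm (orbit x) k).trans hx'.1, List.forall_mem_map.2 fun y hy ↦
    (dist_le_pi_dist (orbit x) (orbit y) k).trans_lt (hx'.2 _ (List.mem_map_of_mem hy))⟩

end Small

section Contraction

variable {R E : Type*} [CommRing R] [SeminormedAddCommGroup E] [NormedSpace ℝ E]

/-- The chain contraction of a vector space that moves all vertices to `0` in `N` equal steps. -/
noncomputable def contraction (N : ℕ) : Module.End R (Chain R E) :=
  ∑ i ∈ Finset.range N, prism (fun x ↦ (1 - (i + 1 : ℕ) / N : ℝ) • x)
    (fun x ↦ (1 - i / N : ℝ) • x) + cone 0 ∘ₗ map 0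

lemma boundary_contraction_add_contraction_boundary {N : ℕ} (hN : N ≠ 0) (c : Chain R E) :
    boundary (contraction N c) + contraction N (boundary c) = c := by
  let scale (i : ℕ) (x : E) : E := (1 - i / N : ℝ) • x
  have hzero : scale 0 = id := by ext; simp [scale]
  have hlast : scale N = 0 := by ext; simp [scale, hN]
  have htelescope : ∑ i ∈ Finset.range N, (boundary (prism (scale (i + 1)) (scale i) c) +
      prism (scale (i + 1)) (scale i) (boundary c)) = c - map 0 c := by
    simp only [boundary_prism_add_prism_boundary]
    rw [Finset.sum_range_sub' (fun i ↦ map (scale i) c), hzero, hlast, map_id, LinearMap.id_apply]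
  rw [Finset.sum_add_distrib] at htelescope
  calc boundary (contraction N c) + contraction N (boundary c)
      = (∑ i ∈ Finset.range N, boundary (prism (scale (i + 1)) (scale i) c) +
          ∑ i ∈ Finset.range N, prism (scale (i + 1)) (scale i) (boundary c)) +
          map 0 c := by
        simp only [contraction, LinearMap.add_apply, LinearMap.sum_apply, LinearMap.comp_apply,
          map_add, map_sum, boundary_cone, boundary_map, scale]
        abel
    _ = c := by rw [htelescope]; abel

lemma contraction_mem_supported_small {N : ℕ} (hN : N ≠ 0) {r ε : ℝ} (hε : 0 < ε) (hr : 0 ≤ r)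
    (hNε : r ≤ N * ε) {c : Chain R E} (hc : c ∈ Finsupp.supported R R (small r ε)) :
    contraction N c ∈ Finsupp.supported R R (small r (ε + ε)) := by
  have hN' : (0 : ℝ) < N := by positivity
  simp only [contraction, LinearMap.add_apply, LinearMap.sum_apply, LinearMap.comp_apply]
  refine add_mem (sum_mem fun i hi ↦ ?_) (map_mem_of_forall_single_mem (f := cone 0 ∘ₗ map 0) ?_ hc)
  · have hscale (j : ℕ) (hj : j ≤ N) : ‖(1 - j / N : ℝ)‖ ≤ 1 := by
      have hj' : (j : ℝ) / N ≤ 1 := (div_le_one hN').2 (by exact_mod_cast hj)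
      have : (0 : ℝ) ≤ j / N := by positivity
      rw [Real.norm_of_nonneg] <;> linarith
    have hi' : i + 1 ≤ N := Finset.mem_range.1 hi
    refine prism_mem_supported_small ?_ ?_ hε.le (fun x hx ↦ ?_) hc
    · rintro u (rfl | rfl) x <;> rw [norm_smul] <;>
        exact mul_le_of_le_one_left (norm_nonneg x) (hscale _ (by omega))
    · rintro u (rfl | rfl) x y <;> rw [dist_smul₀] <;>
        exact mul_le_of_le_one_left dist_nonneg (hscale _ (by omega))
    · rw [dist_comm, dist_eq_norm, ← sub_smul, norm_smul]
      have hstep : (1 - i / N : ℝ) - (1 - (i + 1 : ℕ) / N) = (N : ℝ)⁻¹ := by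
        push_cast
        field_simp
        ring
      rw [hstep, norm_inv, Real.norm_of_nonneg hN'.le, inv_mul_le_iff₀ hN']
      exact hx.trans hNε
  · intro l _
    rw [LinearMap.comp_apply, map_single, cone_single]
    refine Finsupp.single_mem_supported R 1 ?_
    have hzero : ∀ x ∈ (0 : E) :: l.map 0, x = 0 := by simp
    intro x hx
    refine ⟨by rwa [hzero x hx, norm_zero], fun y hy ↦ ?_⟩
    rw [hzero x hx, hzero y hy, dist_self]
    positivity

lemma exists_boundary_eq_of_small {r ε : ℝ} (hε : 0 < ε) (hr : 0 ≤ r) {w : Chain R E}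
    (hw : boundary w = 0) (hws : w ∈ Finsupp.supported R R (small r (ε / 2))) :
    ∃ c ∈ Finsupp.supported R R (small r ε), boundary c = w := by
  obtain ⟨N, hN⟩ := exists_nat_ge (r / (ε / 2))
  refine ⟨contraction (N + 1) w, ?_, ?_⟩
  · rw [div_le_iff₀ (by positivity)] at hN
    have := contraction_mem_supported_small N.succ_ne_zero (by positivity) hr
      (hN.trans (by gcongr; simp)) hws
    rwa [add_halves] at this
  · simpa [hw] using boundary_contraction_add_contraction_boundary N.succ_ne_zero w

theorem exists_smithTower_small [ProperSpace E] {p : ℕ} [NeZero p] {t : E → E}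
    (ht : Continuous t) (htp : t^[p] = id) {z : Chain R E} (hz : boundary z = 0)
    (htz : map t z = z) {r₀ : ℝ} (hr₀ : 0 ≤ r₀)
    (hzs : ∀ ε > 0, z ∈ Finsupp.supported R R (small r₀ ε)) (m : ℕ) :
    ∃ r, ∀ ε > 0, ∃ c,
      SmithTower (map t) p boundary (Finsupp.supported R R (small r ε)) z m c := by
  have hperiod : map (R := R) t ^ p = 1 := by rw [map_pow_eq_map_iterate, htp, map_id]; rfl
  induction m with
  | zero =>
    refine ⟨r₀, fun ε hε ↦ ?_⟩
    obtain ⟨c, hc, hcz⟩ := exists_boundary_eq_of_small hε hr₀ hz (hzs _ (by positivity))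
    exact ⟨c, .zero hc hcz⟩
  | succ m ih =>
    obtain ⟨r, hr⟩ := ih
    obtain ⟨r', hr', hpow⟩ := exists_pow_map_mem_supported_small (R := R) ht htp r
    refine ⟨r', fun ε hε ↦ ?_⟩
    obtain ⟨δ, hδ, hpow⟩ := hpow (ε / 2) (by positivity)
    obtain ⟨c, hc⟩ := hr δ hδ
    obtain ⟨c', hc', hcc'⟩ := exists_boundary_eq_of_small hε hr'
      (hc.d_smithOp_eq_zero hperiod (boundary_comp_map t) htz)
      (smithOp_apply_mem (hpow c hc.mem) p (m + 1))
    refine ⟨c', .succ (hc.map (f := LinearMap.id) rfl rfl fun c hc ↦ ?_) hc' hcc'⟩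
    exact Finsupp.supported_mono (fun l hl x hx ↦ ⟨(hl x hx).1, fun y hy ↦
      ((hl x hx).2 y hy).trans (half_lt_self hε)⟩) (hpow c hc 0)

end Contraction

end Chain

/-! ### Gap labels -/

section Gaps

variable {α : Type*}

/-- `A` is a nonempty set on which the values of `f` exceed those elsewhere by a gap of size at
least `η`. -/
structure IsGapSet (η : ℝ) (f : α → ℝ) (A : Finset α) : Prop where
  nonempty : A.Nonempty
  add_le : ∀ j ∈ A, ∀ l ∉ A, f l + η ≤ f j

namespace IsGapSet

variable {η : ℝ} {f g : α → ℝ} {A B : Finset α}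

lemma eq_of_forall_abs_sub_lt (hA : IsGapSet η f A) (hB : IsGapSet η g B)
    (hcard : A.card = B.card) (hfg : ∀ j, |f j - g j| < η) : A = B := by
  by_contra hne
  obtain ⟨j, hjA, hjB⟩ := Finset.not_subset.1 fun h ↦
    hne (Finset.eq_of_subset_of_card_le h hcard.ge)
  obtain ⟨l, hlB, hlA⟩ := Finset.not_subset.1 fun h ↦
    hne (Finset.eq_of_subset_of_card_le h hcard.le).symm
  linarith [hA.add_le j hjA l hlA, hB.add_le l hlB j hjB, (abs_lt.1 (hfg j)).2,
    (abs_lt.1 (hfg l)).1]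

lemma comp_equiv {β : Type*} (hA : IsGapSet η f A) (e : β ≃ α) :
    IsGapSet η (f ∘ e) (A.map e.symm.toEmbedding) where
  nonempty := hA.nonempty.map
  add_le j hj l hl := hA.add_le _ (by simpa using hj) _ (by simpa using hl)

/-- Rounding up `(f a - f j) / η`, the elements of `α` other than `j` cannot realize all the values
`1, ..., card α`; the missing value is the position of a gap. -/
lemma exists_of_add_card_mul_le [Fintype α] (hη : 0 < η) {j l : α}
    (h : f j + Fintype.card α * η ≤ f l) :
    ∃ A, IsGapSet η f A ∧ A.card < Fintype.card α := by
  classical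
  let g : α → ℕ := fun a ↦ ⌈(f a - f j) / η⌉₊
  obtain ⟨k, hk, hkg⟩ : ∃ k ∈ Finset.Icc 1 (Fintype.card α), k ∉ (Finset.univ.erase j).image g :=
    Finset.exists_mem_notMem_of_card_lt_card <| Finset.card_image_le.trans_lt <| by
      simpa [Finset.card_erase_of_mem] using Fintype.card_pos_iff.2 ⟨j⟩
  obtain ⟨hk1, hkα⟩ := Finset.mem_Icc.1 hk
  have hgj : g j < k := by simpa [g] using Nat.pos_of_ne_zero (Nat.one_le_iff_ne_zero.1 hk1)
  have hg_ne (a : α) : g a ≠ k := fun ha ↦ hkg <| Finset.mem_image.2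
    ⟨a, Finset.mem_erase.2 ⟨by rintro rfl; exact hgj.ne ha, Finset.mem_univ a⟩, ha⟩
  have hgl : Fintype.card α ≤ g l := by
    rw [← Nat.cast_le (α := ℝ)]
    exact ((le_div_iff₀ hη).2 (by linarith)).trans (Nat.le_ceil _)
  refine ⟨({a | k < g a} : Finset α), ⟨⟨l, ?_⟩, fun a ha b hb ↦ ?_⟩,
    Finset.card_lt_univ_of_notMem (x := j) (by simpa using hgj.le)⟩
  · simpa using (hkα.trans hgl).lt_of_ne' (hg_ne l)
  · have hka : (k : ℝ) < (f a - f j) / η := Nat.lt_ceil.1 (by simpa using ha)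
    have hkb : (f b - f j) / η ≤ (k - 1 : ℕ) :=
      Nat.ceil_le.1 (Nat.le_sub_one_of_lt
        ((not_lt.1 fun h ↦ hb (by simpa using h)).lt_of_ne (hg_ne b)))
    rw [Nat.cast_sub hk1, Nat.cast_one, div_le_iff₀ hη] at hkb
    rw [lt_div_iff₀ hη] at hka
    linarith

end IsGapSet

namespace Label

variable {p : ℕ} {κ V : Type*}

/-- Minus the average of a set of residues, which increases by `1` when the set is shifted by `-1`.
It is `0` by junk division on the whole of `ZMod p`. -/
def angle [Fact p.Prime] (A : Finset (ZMod p)) : ZMod p := -(∑ a ∈ A, a) / A.card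

lemma angle_map_subRight_one [Fact p.Prime] {A : Finset (ZMod p)} (hA : A.Nonempty)
    (hAp : A.card < p) : angle (A.map (Equiv.subRight 1).toEmbedding) = angle A + 1 := by
  have hcard : (A.card : ZMod p) ≠ 0 := by
    rw [Ne, ZMod.natCast_eq_zero_iff]
    exact Nat.not_dvd_of_pos_of_lt hA.card_pos hAp
  simp only [angle, Finset.sum_map, Finset.card_map, Equiv.coe_toEmbedding, Equiv.subRight_apply,
    Finset.sum_sub_distrib, Finset.sum_const, nsmul_one]
  field_simp
  ring

/-- `A` is a gap set of size `k.2` for the function `w k.1`. -/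
def IsGap (η : ℝ) (w : κ → ZMod p → ℝ) (k : κ × Fin p) (A : Finset (ZMod p)) : Prop :=
  IsGapSet η (w k.1) A ∧ A.card = k.2

/-- Shifts the argument of every function of a family by `1`. -/
def shift (w : κ → ZMod p → ℝ) : κ → ZMod p → ℝ := fun i j ↦ w i (j + 1)

variable {η : ℝ} {w w' : κ → ZMod p → ℝ} {k : κ × Fin p} {A B : Finset (ZMod p)}

lemma IsGap.eq_of_forall_abs_sub_lt (hA : IsGap η w k A) (hB : IsGap η w' k B)
    (h : ∀ i j, |w i j - w' i j| < η) : A = B :=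
  hA.1.eq_of_forall_abs_sub_lt hB.1 (hA.2.trans hB.2.symm) (h k.1)

lemma isGap_shift_iff : IsGap η (shift w) k (A.map (Equiv.subRight 1).toEmbedding) ↔
    IsGap η w k A := by
  refine and_congr ⟨fun h ↦ ?_, fun h ↦ h.comp_equiv (Equiv.subRight 1).symm⟩ (by simp)
  convert h.comp_equiv (Equiv.subRight 1) using 1
  · ext j; simp [shift]
  · ext j; simp

lemma exists_isGap_shift_iff : (∃ A, IsGap η (shift w) k A) ↔ ∃ A, IsGap η w k A :=
  ⟨fun ⟨A, hA⟩ ↦ ⟨A.map (Equiv.addRight 1).toEmbedding, isGap_shift_iff.1 (by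
    convert hA; ext; simp)⟩, fun ⟨_, hA⟩ ↦ ⟨_, isGap_shift_iff.2 hA⟩⟩

open Classical in
/-- The label of a family of functions on `ZMod p`: its kind is chosen among the positions and sizes
of gap sets, with angle that of the gap set, and it is the fixed label `v` if there is no gap. -/
noncomputable def gapLabel [Fact p.Prime] (η : ℝ) (w : κ → ZMod p → ℝ) (v : V) :
    Label V (κ × Fin p) p :=
  if h : ∃ k A, IsGap η w k A then .inr (h.choose, angle h.choose_spec.choose) else .inl v

variable [Fact p.Prime]

lemma gapLabel_eq_inl (h : ∀ k A, ¬ IsGap η w k A) (v : V) : gapLabel η w v = .inl v :=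
  dif_neg (by simpa using h)

lemma exists_isGap_of_kind_gapLabel {v : V} (h : kind (gapLabel η w v) = some k) :
    ∃ A, IsGap η w k A ∧ gapLabel η w v = .inr (k, angle A) := by
  unfold gapLabel at h ⊢
  split_ifs at h ⊢ with hgap
  · obtain rfl : hgap.choose = k := by simpa [kind] using h
    exact ⟨_, hgap.choose_spec.choose_spec, rfl⟩
  · simp [kind] at h

lemma not_isGap_of_kind_gapLabel {v : V} (h : kind (gapLabel η w v) = none) (k : κ × Fin p)
    (A : Finset (ZMod p)) : ¬ IsGap η w k A := by
  intro hA
  rw [gapLabel, dif_pos ⟨k, A, hA⟩] at h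
  simp [kind] at h

lemma gapLabel_eq_of_kind_eq {v v' : V} (h : ∀ i j, |w i j - w' i j| < η)
    (hkind : kind (gapLabel η w v) = kind (gapLabel η w' v'))
    (hv : kind (gapLabel η w v) = none → v = v') : gapLabel η w v = gapLabel η w' v' := by
  cases hk : kind (gapLabel η w v) with
  | none =>
    rw [gapLabel_eq_inl (not_isGap_of_kind_gapLabel hk),
      gapLabel_eq_inl (not_isGap_of_kind_gapLabel (hkind.symm.trans hk)), hv hk]
  | some k =>
    obtain ⟨A, hA, hlabel⟩ := exists_isGap_of_kind_gapLabel hk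
    obtain ⟨B, hB, hlabel'⟩ := exists_isGap_of_kind_gapLabel (hkind.symm.trans hk)
    rw [hlabel, hlabel', hA.eq_of_forall_abs_sub_lt hB h]

open Classical in
lemma kind_gapLabel_shift (v : V) : kind (gapLabel η (shift w) v) = kind (gapLabel η w v) := by
  have hgap : (fun k ↦ ∃ A, IsGap η (shift w) k A) = fun k ↦ ∃ A, IsGap η w k A :=
    funext fun _ ↦ propext exists_isGap_shift_iff
  simp only [gapLabel, apply_dite kind]
  exact congrArg (fun Q : κ × Fin p → Prop ↦ if h : ∃ k, Q k then some h.choose else none) hgap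

lemma gapLabel_shift (hη : 0 < η) (v : V) : gapLabel η (shift w) v = rot (gapLabel η w v) := by
  cases hk : kind (gapLabel η w v) with
  | none =>
    rw [gapLabel_eq_inl (not_isGap_of_kind_gapLabel hk),
      gapLabel_eq_inl (not_isGap_of_kind_gapLabel ((kind_gapLabel_shift v).trans hk)), rot_inl]
  | some k =>
    obtain ⟨A, hA, hlabel⟩ := exists_isGap_of_kind_gapLabel hk
    obtain ⟨B, hB, hlabel'⟩ := exists_isGap_of_kind_gapLabel ((kind_gapLabel_shift v).trans hk)
    rw [hlabel, hlabel', hB.eq_of_forall_abs_sub_lt (isGap_shift_iff.2 hA) (by simp [hη]),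
      angle_map_subRight_one hA.1.nonempty (hA.2 ▸ k.2.2)]
    rfl

lemma lt_add_mul_of_kind_gapLabel {v : V} (hη : 0 < η) (h : kind (gapLabel η w v) = none) (i : κ)
    (j l : ZMod p) : w i l < w i j + p * η := by
  by_contra! hjl
  obtain ⟨A, hA, hcard⟩ := IsGapSet.exists_of_add_card_mul_le hη
    (by rwa [ZMod.card] : w i j + Fintype.card (ZMod p) * η ≤ w i l)
  rw [ZMod.card] at hcard
  exact not_isGap_of_kind_gapLabel h (i, ⟨A.card, hcard⟩) A ⟨hA, rfl⟩

lemma gapLabel_of_forall_eq (hη : 0 < η) (h : ∀ i j l, w i j = w i l) (v : V) :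
    gapLabel η w v = .inl v := by
  refine gapLabel_eq_inl (fun k A hA ↦ ?_) v
  obtain ⟨a, ha⟩ := hA.1.nonempty
  obtain ⟨b, hb⟩ : ∃ b, b ∉ A := by
    by_contra! huniv
    have hlt : A.card < p := hA.2 ▸ k.2.2
    rw [Finset.eq_univ_iff_forall.2 huniv, Finset.card_univ, ZMod.card] at hlt
    exact hlt.false
  linarith [hA.1.add_le a ha b hb, h k.1 a b]

end Label

end Gaps

/-! ### Fixed points of periodic maps -/

section FixedPoints

open Chain Filter Topology

section Evaluation

variable {R X : Type*} [CommRing R]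

lemma Chain.boundary_swapSum_apply_eq_zero (a : List X) (x y : X) (b : List X) {l : List X}
    (hl : l.length < 2) : boundary (swapSum (R := R) a x y b) l = 0 := by
  refine Submodule.span_le (p := LinearMap.ker (Finsupp.lapply (R := R) l)).2 ?_
    (boundary_swapSum_mem_span a x y b)
  rintro _ ⟨a', b', -, rfl⟩
  have hne (x y : X) : a' ++ x :: y :: b' ≠ l := by
    rintro rfl
    simp at hl
    omega
  simp [swapSum, hne]

lemma Chain.boundary_single_apply_eq_zero {l l' : List X} (h : l'.length + 1 ≠ l.length) :
    boundary (Finsupp.single l (1 : R)) l' = 0 :=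
  Finsupp.notMem_support_iff.1 fun hl' ↦ h (boundary_single_mem l hl').2

namespace Label

variable {V ι : Type*} {p : ℕ} {W : Set V}

lemma rot_injective : Function.Injective (rot : Label V ι p → Label V ι p) :=
  Sum.map_injective.2 ⟨Function.injective_id, Function.injective_id.prodMap (add_left_injective 1)⟩

lemma lapply_comp_map_rot (l : List V) :
    Finsupp.lapply (l.map .inl) ∘ₗ map (R := R) (rot : Label V ι p → Label V ι p) =
      Finsupp.lapply (l.map .inl) := by
  classical
  refine hom_ext fun l' ↦ ?_
  have hl : (l.map .inl).map (rot : Label V ι p → Label V ι p) = l.map .inl := by simp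
  have hiff : l'.map rot = l.map .inl ↔ l' = l.map .inl := by
    conv_lhs => rw [← hl]
    exact (List.map_injective_iff.2 rot_injective).eq_iff
  simp [Finsupp.single_apply, hiff]

lemma boundary_apply_eq_zero_of_mem_degenerate {l₀ : List (Label V ι p)} (hl₀ : l₀.length < 2)
    (h : ∀ l ∈ admissible W, (∀ x ∈ l, kind x = none) →
      boundary (Finsupp.single l (1 : R)) l₀ = 0)
    {c : Chain R (Label V ι p)} (hc : c ∈ degenerate R W 0) : boundary c l₀ = 0 := by
  refine (degenerate_le_iff (S := LinearMap.ker (Finsupp.lapply l₀ ∘ₗ boundary))).2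
    (fun c hc ↦ ?_) hc
  cases hc with
  | swap => exact boundary_swapSum_apply_eq_zero _ _ _ _ hl₀
  | fixed hl hfix => exact h _ hl hfix
  | short hl => simp at hl

end Label

end Evaluation

section Colouring

variable {κ V : Type*} {p : ℕ} {t : (κ → ℝ) → κ → ℝ}

/-- The coordinates of the points of an orbit of length `p`. -/
def orbitCoord (p : ℕ) (t : (κ → ℝ) → κ → ℝ) (x : κ → ℝ) (i : κ) (j : ZMod p) : ℝ :=
  t^[j.val] x i

lemma orbitCoord_apply [NeZero p] (ht : t^[p] = id) (x : κ → ℝ) :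
    orbitCoord p t (t x) = Label.shift (orbitCoord p t x) := by
  ext i j
  have hx : Function.IsPeriodicPt t p x := congr_fun ht x
  have hval : (j + 1).val = (j.val + 1) % p := by
    rw [ZMod.val_add, ZMod.val_one_eq_one_mod, Nat.add_mod_mod]
  rw [Label.shift, orbitCoord, orbitCoord, hval, hx.iterate_mod_apply, Function.iterate_succ_apply]

variable [Fintype κ]

/-- A `t`-invariant colouring which is locally constant with values in `W` close to the fixed points
of `t`, uniformly on bounded sets. -/
structure IsNearFixedColouring (t : (κ → ℝ) → κ → ℝ) (u : (κ → ℝ) → V) (W : Set V) : Prop where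
  apply_eq : ∀ x, u (t x) = u x
  exists_forall : ∀ r, ∃ δ > 0, ∀ x y, ‖x‖ ≤ r → ‖y‖ ≤ r → dist x y < δ →
    dist (t x) x < δ → dist (t y) y < δ → u x = u y ∧ u x ∈ W

lemma IsNearFixedColouring.of_eventually {u : (κ → ℝ) → V} {W : Set V} (ht : Continuous t)
    (hut : ∀ x, u (t x) = u x) (hu : ∀ x, t x = x → u x ∈ W ∧ ∀ᶠ y in 𝓝 x, u y = u x) :
    IsNearFixedColouring t u W where
  apply_eq := hut
  exists_forall r := by
    set S : Set ((κ → ℝ) × (κ → ℝ)) := {z | u z.1 = u z.2 ∧ u z.1 ∈ W}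
    let K : Set (κ → ℝ) := Metric.closedBall 0 r
    have hK : IsCompact ((K ×ˢ K) \ interior S) :=
      ((isCompact_closedBall 0 r).prod (isCompact_closedBall 0 r)).diff isOpen_interior
    let f : (κ → ℝ) × (κ → ℝ) → ℝ := fun z ↦
      max (dist z.1 z.2) (max (dist (t z.1) z.1) (dist (t z.2) z.2))
    have hf : Continuous f := by fun_prop
    obtain ⟨δ, hδ, hfδ⟩ := hK.exists_forall_le' hf.continuousOn (a := 0) (by
      rintro ⟨x, y⟩ ⟨-, hxy⟩
      by_contra! hle
      obtain ⟨rfl, hx, -⟩ : x = y ∧ t x = x ∧ t y = y := by simpa [f] using hle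
      obtain ⟨hxW, hux⟩ := hu x hx
      refine hxy (mem_interior_iff_mem_nhds.2 ?_)
      filter_upwards [(hux.prod_nhds hux)] with z hz
      exact ⟨hz.1.trans hz.2.symm, hz.1 ▸ hxW⟩)
    refine ⟨δ, hδ, fun x y hx hy hxy htx hty ↦ ?_⟩
    by_contra hS
    refine (hfδ (x, y) ⟨⟨by simpa [K] using hx, by simpa [K] using hy⟩,
      fun h ↦ hS (interior_subset h : (x, y) ∈ S)⟩).not_gt ?_
    exact max_lt hxy (max_lt htx hty)

lemma exists_forall_abs_orbitCoord_sub_lt [NeZero p] (ht : Continuous t) {η : ℝ} (hη : 0 < η)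
    (r : ℝ) : ∃ ε > 0, ∀ x y, ‖x‖ ≤ r → ‖y‖ ≤ r → dist x y < ε →
      ∀ i j, |orbitCoord p t x i j - orbitCoord p t y i j| < η := by
  have hcont : Continuous (orbitCoord p t) := continuous_pi fun i ↦ continuous_pi fun j ↦
    (continuous_apply i).comp (ht.iterate _)
  obtain ⟨ε, hε, h⟩ := Metric.uniformContinuousOn_iff.1
    ((isCompact_closedBall 0 r).uniformContinuousOn_of_continuous hcont.continuousOn) η hη
  refine ⟨ε, hε, fun x y hx hy hxy i j ↦ ?_⟩
  have := h x (by simpa using hx) y (by simpa using hy) hxy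
  simp only [dist_pi_lt_iff hη, Real.dist_eq] at this
  exact this i j

variable [Fact p.Prime]

lemma dist_lt_of_kind_gapLabel {η : ℝ} (hη : 0 < η) {x : κ → ℝ} {v : V}
    (h : (Label.gapLabel η (orbitCoord p t x) v).kind = none) : dist (t x) x < p * η := by
  have hp : p.Prime := Fact.out
  have : Fact (1 < p) := ⟨hp.one_lt⟩
  have hone (i) : orbitCoord p t x i 1 = t x i := by simp [orbitCoord, ZMod.val_one]
  have hzero (i) : orbitCoord p t x i 0 = x i := by simp [orbitCoord]
  refine (dist_pi_lt_iff (mul_pos (mod_cast hp.pos) hη)).2 fun i ↦ abs_lt.2 ⟨?_, ?_⟩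
  · linarith [Label.lt_add_mul_of_kind_gapLabel hη h i 1 0, hone i, hzero i]
  · linarith [Label.lt_add_mul_of_kind_gapLabel hη h i 0 1, hone i, hzero i]

theorem IsNearFixedColouring.exists_map_gapLabel_mem_admissible {u : (κ → ℝ) → V} {W : Set V}
    (hu : IsNearFixedColouring t u W) (ht : Continuous t) (r : ℝ) :
    ∃ η > 0, ∃ ε > 0, ∀ l ∈ small r ε,
      l.map (fun x ↦ Label.gapLabel η (orbitCoord p t x) (u x)) ∈ Label.admissible W := by
  obtain ⟨δ, hδ, hδu⟩ := hu.exists_forall r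
  have hp : (0 : ℝ) < p := by exact_mod_cast (Fact.out : p.Prime).pos
  have hη : 0 < δ / p := div_pos hδ hp
  obtain ⟨ε, hε, hεw⟩ := exists_forall_abs_orbitCoord_sub_lt (p := p) ht hη r
  have hnear {x : κ → ℝ} (hk : (Label.gapLabel (δ / p) (orbitCoord p t x) (u x)).kind = none) :
      dist (t x) x < δ := by simpa [mul_div_cancel₀ _ hp.ne'] using dist_lt_of_kind_gapLabel hη hk
  refine ⟨δ / p, hη, min δ ε, lt_min hδ hε, fun l hl ↦
    ⟨List.forall_mem_map.2 fun x hx ↦ List.forall_mem_map.2 fun y hy hkind ↦ ?_, fun v hv ↦ ?_⟩⟩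
  · have hxy := (hl x hx).2 y hy
    refine Label.gapLabel_eq_of_kind_eq (hεw x y (hl x hx).1 (hl y hy).1
      (hxy.trans_le (min_le_right _ _))) hkind fun hk ↦ ?_
    exact (hδu x y (hl x hx).1 (hl y hy).1 (hxy.trans_le (min_le_left _ _)) (hnear hk)
      (hnear (hkind.symm.trans hk))).1
  · obtain ⟨x, hx, hxv⟩ := List.mem_map.1 hv
    have hk : (Label.gapLabel (δ / p) (orbitCoord p t x) (u x)).kind = none := by rw [hxv]; rfl
    rw [Label.gapLabel_eq_inl (Label.not_isGap_of_kind_gapLabel hk)] at hxv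
    obtain rfl := Sum.inl_injective hxv
    exact (hδu x x (hl x hx).1 (hl x hx).1 (by simpa using hδ) (hnear hk) (hnear hk)).2

theorem IsNearFixedColouring.apply_map_eq_zero {R N : Type*} [CommRing R] [AddCommGroup N]
    [Module R N] (hp : (p : R) = 0) (h2 : IsUnit (2 : R)) {u : (κ → ℝ) → V} {W : Set V}
    (hu : IsNearFixedColouring t u W) (ht : Continuous t) (htp : t^[p] = id)
    {z : Chain R (κ → ℝ)} (hz : boundary z = 0)
    (hzfix : z ∈ Finsupp.supported R R {l | ∀ x ∈ l, t x = x})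
    {r₀ : ℝ} (hr₀ : 0 ≤ r₀) (hzs : ∀ ε > 0, z ∈ Finsupp.supported R R (small r₀ ε))
    {α : Chain R (Label V (κ × Fin p) p) →ₗ[R] N} (hα : α ∘ₗ map Label.rot = α)
    (hαD : ∀ c ∈ Label.degenerate R W 0, α (boundary c) = 0) :
    α (map (fun x ↦ .inl (u x)) z) = 0 := by
  have htz : map t z = z := by
    refine (eq_of_forall_single_eq (g := LinearMap.id) (fun l hl ↦ ?_) hzfix :)
    rw [map_single, List.map_congr_left (g := id) hl, List.map_id, LinearMap.id_apply]
  obtain ⟨r, hr⟩ := exists_smithTower_small ht htp hz htz hr₀ hzs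
    (Fintype.card (κ × Fin p) + 2)
  obtain ⟨η, hη, ε, hε, hadm⟩ := hu.exists_map_gapLabel_mem_admissible (p := p) ht r
  let label : (κ → ℝ) → Label V (κ × Fin p) p := fun x ↦ .gapLabel η (orbitCoord p t x) (u x)
  have hlabel_t : label ∘ t = Label.rot ∘ label := funext fun x ↦ by
    simp only [label, Function.comp_apply, orbitCoord_apply htp, hu.apply_eq,
      Label.gapLabel_shift hη]
  have hlabel_z : map label z = map (fun x ↦ .inl (u x)) z := by
    refine eq_of_forall_single_eq (fun l hl ↦ ?_) hzfix
    rw [map_single, map_single, List.map_congr_left fun x hx ↦ ?_]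
    exact Label.gapLabel_of_forall_eq hη (fun i j k ↦ by
      simp only [orbitCoord, Function.iterate_fixed (hl x hx)]) _
  obtain ⟨c, hc⟩ := hr ε hε
  rw [← hlabel_z]
  refine Label.apply_eq_zero_of_smithTower hp h2 hα hαD (Nat.lt_succ_self _) (hc.map
    (by rw [map_comp_map, map_comp_map, hlabel_t]) (boundary_comp_map label).symm fun c hc ↦ ?_)
  refine map_mem_of_forall_single_mem (fun l hl ↦ ?_) hc
  rw [map_single]
  exact Finsupp.single_mem_supported R 1 (hadm l hl)

end Colouring

section Connected

variable {p : ℕ} [Fact p.Prime]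

lemma isUnit_two_of_odd (hp : Odd p) : IsUnit (2 : ZMod p) := by
  simpa using (ZMod.isUnit_iff_coprime 2 p).2 hp.coprime_two_left

section Pi

variable {κ : Type*} [Finite κ] {t : (κ → ℝ) → κ → ℝ}

lemma exists_apply_eq_self_of_pi (hp : Odd p) (ht : Continuous t) (htp : t^[p] = id) :
    ∃ x, t x = x := by
  cases nonempty_fintype κ
  by_contra! hfix
  have hu : IsNearFixedColouring t (fun _ ↦ ()) ∅ :=
    .of_eventually ht (fun _ ↦ rfl) fun x hx ↦ absurd hx (hfix x)
  have := hu.apply_map_eq_zero (R := ZMod p) (z := Finsupp.single [] 1) (by simp)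
    (isUnit_two_of_odd hp) ht htp boundary_single_nil (Finsupp.single_mem_supported _ _ (by simp))
    le_rfl (fun ε _ ↦ Finsupp.single_mem_supported _ _ (by simp [small]))
    (Label.lapply_comp_map_rot []) fun c hc ↦
      Label.boundary_apply_eq_zero_of_mem_degenerate (by simp) (fun l hl hk ↦ ?_) hc
  · simp at this
  · rcases l with _ | ⟨v | x, l⟩
    · simp [boundary_single_nil]
    · exact absurd (hl.2 v (by simp)) (Set.notMem_empty v)
    · simpa [Label.kind] using hk (.inr x) (by simp)

lemma apply_iff_of_eventually (hp : Odd p) (ht : Continuous t) (htp : t^[p] = id)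
    {P : (κ → ℝ) → Prop} (hPt : ∀ x, P (t x) ↔ P x)
    (hP : ∀ x, t x = x → ∀ᶠ y in 𝓝 x, P y ↔ P x) {a b : κ → ℝ} (ha : t a = a) (hb : t b = b) :
    P a ↔ P b := by
  classical
  cases nonempty_fintype κ
  have hu : IsNearFixedColouring t P Set.univ := .of_eventually ht (fun x ↦ propext (hPt x))
    fun x hx ↦ ⟨trivial, (hP x hx).mono fun _ h ↦ propext h⟩
  have := hu.apply_map_eq_zero (R := ZMod p) (r₀ := max ‖a‖ ‖b‖)
    (z := Finsupp.single [a] 1 - Finsupp.single [b] 1) (by simp) (isUnit_two_of_odd hp) ht htp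
    (by simp [boundary_single_cons, boundary_single_nil])
    (sub_mem (Finsupp.single_mem_supported _ _ (by simpa using ha))
      (Finsupp.single_mem_supported _ _ (by simpa using hb))) (by positivity)
    (fun ε hε ↦ sub_mem (Finsupp.single_mem_supported _ _ (by simp [small, hε]))
      (Finsupp.single_mem_supported _ _ (by simp [small, hε])))
    (Label.lapply_comp_map_rot [True]) fun c hc ↦
      Label.boundary_apply_eq_zero_of_mem_degenerate (by simp) (fun l hl hk ↦ ?_) hc
  · by_cases hPa : P a <;> by_cases hPb : P b <;> simp [hPa, hPb] at this ⊢
  · by_cases hlen : l.length = 2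
    · obtain ⟨x, y, rfl⟩ := List.length_eq_two.1 hlen
      obtain rfl := hl.1 x (by simp) y (by simp)
        ((hk x (by simp)).trans (hk y (by simp)).symm)
      simp [boundary_single_cons, boundary_single_nil]
    · exact boundary_single_apply_eq_zero (by simpa using Ne.symm hlen)

lemma forall_iterate_mem_iff {X : Type*} {n : ℕ} [NeZero n] {t : X → X} (htn : t^[n] = id)
    {U : Set X} (x : X) : (∀ j, t^[j] (t x) ∈ U) ↔ ∀ j, t^[j] x ∈ U := by
  refine ⟨fun h j ↦ ?_, fun h j ↦ h (j + 1)⟩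
  have hj := h (j + (n - 1))
  rwa [← Function.iterate_succ_apply, Nat.succ_eq_add_one, add_assoc,
    Nat.sub_add_cancel NeZero.one_le, Function.iterate_add_apply, htn] at hj

theorem isPreconnected_fixedPoints_of_pi (hp : Odd p) (ht : Continuous t) (htp : t^[p] = id) :
    IsPreconnected (Function.fixedPoints t) := by
  rw [isPreconnected_iff_subset_of_fully_disjoint_closed (isClosed_fixedPoints ht)]
  intro A B hA hB hAB hdisj
  by_contra! hcon
  obtain ⟨b, hb, hbA⟩ := Set.not_subset.1 hcon.1
  obtain ⟨a, ha, haB⟩ := Set.not_subset.1 hcon.2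
  obtain ⟨U, V, hU, hV, hAU, hBV, hUV⟩ := normal_separation hA hB hdisj
  have hUb : ¬ ∀ j, t^[j] b ∈ U := fun h ↦
    Set.disjoint_left.1 hUV (h 0) (hBV ((hAB hb).resolve_left hbA))
  have hUa : ∀ j, t^[j] a ∈ U := fun j ↦ by
    rw [Function.iterate_fixed ha]
    exact hAU ((hAB ha).resolve_right haB)
  refine hUb ((apply_iff_of_eventually (P := fun x ↦ ∀ j, t^[j] x ∈ U) hp ht htp
    (forall_iterate_mem_iff htp) (fun x hx ↦ ?_) ha hb).1 hUa)
  rcases hAB hx with hxA | hxB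
  · have hxU (j : ℕ) : t^[j] x ∈ U := by rw [Function.iterate_fixed hx]; exact hAU hxA
    have hnear : ∀ᶠ y in 𝓝 x, ∀ j ∈ Finset.range p, t^[j] y ∈ U :=
      (Finset.eventually_all _).2 fun j _ ↦
        (ht.iterate j).continuousAt.eventually_mem (hU.mem_nhds (hxU j))
    filter_upwards [hnear] with y hy
    refine iff_of_true (fun j ↦ ?_) hxU
    have hper : Function.IsPeriodicPt t p y := congr_fun htp y
    rw [← hper.iterate_mod_apply]
    exact hy _ (Finset.mem_range.2 (Nat.mod_lt _ (Fact.out : p.Prime).pos))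
  · have hVU {y : κ → ℝ} (hy : y ∈ V) : ¬ ∀ j, t^[j] y ∈ U := fun h ↦
      Set.disjoint_left.1 hUV (h 0) hy
    filter_upwards [hV.mem_nhds (hBV hxB)] with y hy
    exact iff_of_false (hVU hy) (hVU (hBV hxB))

end Pi

/-- **Smith's theorem** in degree zero. -/
theorem isConnected_fixedPoints {E : Type*} [NormedAddCommGroup E] [NormedSpace ℝ E]
    [FiniteDimensional ℝ E] {t : E → E} (hp : Odd p) (ht : Continuous t) (htp : t^[p] = id) :
    IsConnected (Function.fixedPoints t) := by
  let e : E ≃L[ℝ] (Fin (Module.finrank ℝ E) → ℝ) := ContinuousLinearEquiv.ofFinrankEq (by simp)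
  set s : (Fin (Module.finrank ℝ E) → ℝ) → Fin (Module.finrank ℝ E) → ℝ := e ∘ t ∘ e.symm with hs
  have hsemi : Function.Semiconj e.symm s t := fun x ↦ by simp [hs]
  have hsc : Continuous s := by fun_prop
  have hsp : s^[p] = id := funext fun x ↦ e.symm.injective <| by
    rw [(hsemi.iterate_right p).eq x, htp]
    rfl
  have himage : e.symm '' Function.fixedPoints s = Function.fixedPoints t := by
    refine Set.Subset.antisymm hsemi.mapsTo_fixedPoints.image_subset fun x hx ↦ ⟨e x, ?_, by simp⟩
    have hx' : t x = x := hx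
    change e (t (e.symm (e x))) = e x
    rw [e.symm_apply_apply, hx']
  rw [← himage]
  exact IsConnected.image ⟨exists_apply_eq_self_of_pi hp hsc hsp,
    isPreconnected_fixedPoints_of_pi hp hsc hsp⟩ _ e.symm.continuous.continuousOn

end Connected

end FixedPoints

/-! ### Isotypic multiplicities of cyclic groups -/

section Isotypic

open Multiplicative (ofAdd)

variable {N : ℕ} [NeZero N] {V W : Type*} [AddCommGroup V] [Module ℂ V] [AddCommGroup W]
  [Module ℂ W] (σ : Representation ℂ (Multiplicative (ZMod N)) V)

/-- The projection of a complex representation of `ZMod N` onto its isotypic component for the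
character `j ↦ exp (2πi a j / N)`. -/
noncomputable def isotypicProjection (a : ZMod N) : Module.End ℂ V :=
  (N : ℂ)⁻¹ • ∑ j, ZMod.stdAddChar (-(a * j)) • σ (ofAdd j)

/-- The multiplicity of the character `j ↦ exp (2πi a j / N)` in a complex representation of
`ZMod N`. -/
noncomputable def multiplicity (a : ZMod N) : ℕ :=
  Module.finrank ℂ (isotypicProjection σ a).range

lemma mul_isotypicProjection (a k : ZMod N) :
    σ (ofAdd k) * isotypicProjection σ a = ZMod.stdAddChar (a * k) • isotypicProjection σ a := by
  unfold isotypicProjection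
  rw [mul_smul_comm, smul_comm (ZMod.stdAddChar (a * k) : ℂ), Finset.mul_sum]
  congr 1
  rw [Finset.smul_sum, ← Equiv.sum_comp (Equiv.addRight k)
    fun j ↦ (ZMod.stdAddChar (a * k) : ℂ) • (ZMod.stdAddChar (-(a * j)) : ℂ) • σ (ofAdd j)]
  refine Finset.sum_congr rfl fun j _ ↦ ?_
  rw [Equiv.coe_addRight, mul_smul_comm, ← map_mul, ← ofAdd_add, smul_smul,
    ← AddChar.map_add_eq_mul, add_comm k j]
  congr 2
  ring

lemma isIdempotentElem_isotypicProjection (a : ZMod N) :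
    IsIdempotentElem (isotypicProjection σ a) := by
  unfold IsIdempotentElem
  conv_lhs => enter [1]; unfold isotypicProjection
  simp only [smul_mul_assoc, Finset.sum_mul, mul_isotypicProjection, smul_smul,
    ← AddChar.map_add_eq_mul, neg_add_cancel, AddChar.map_zero_eq_one, one_smul,
    Finset.sum_const, Finset.card_univ, ZMod.card, ← Nat.cast_smul_eq_nsmul ℂ]
  rw [inv_mul_cancel₀ (NeZero.ne (N : ℂ)), one_smul]

lemma sum_isotypicProjection : ∑ a, isotypicProjection σ a = 1 := by
  have horth (j : ZMod N) :
      ∑ a, (ZMod.stdAddChar (-(a * j)) : ℂ) = if j = 0 then (N : ℂ) else 0 := by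
    simpa [ZMod.card] using AddChar.sum_mulShift (-j) (ZMod.isPrimitive_stdAddChar N)
  unfold isotypicProjection
  rw [← Finset.smul_sum, Finset.sum_comm]
  simp only [← Finset.sum_smul, horth, ite_smul, zero_smul, Finset.sum_ite_eq', Finset.mem_univ,
    if_true, ofAdd_zero, map_one]
  rw [smul_smul, inv_mul_cancel₀ (NeZero.ne (N : ℂ)), one_smul]

variable {σ}

lemma isotypicProjection_zero_apply {v : V} (hv : σ (ofAdd 1) v = v) :
    isotypicProjection σ 0 v = v := by
  have hfix (j : ZMod N) : σ (ofAdd j) v = v := by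
    have hj : ofAdd j = ofAdd (1 : ZMod N) ^ j.val := by
      rw [← ofAdd_nsmul, nsmul_one, ZMod.natCast_zmod_val]
    rw [hj, map_pow, Module.End.pow_apply, Function.iterate_fixed hv]
  simp [isotypicProjection, hfix, ZMod.card, ← Nat.cast_smul_eq_nsmul ℂ, NeZero.ne]

variable [FiniteDimensional ℂ V] [FiniteDimensional ℂ W]

lemma isotypicProjection_eq_zero {a : ZMod N} (h : multiplicity σ a = 0) :
    isotypicProjection σ a = 0 := by
  rwa [multiplicity, Submodule.finrank_eq_zero, LinearMap.range_eq_bot] at h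

lemma exists_eigenvector_of_multiplicity_ne_zero {a : ZMod N} (h : multiplicity σ a ≠ 0) :
    ∃ v ≠ 0, ∀ k, σ (ofAdd k) v = (ZMod.stdAddChar (a * k) : ℂ) • v := by
  have hrange : (isotypicProjection σ a).range ≠ ⊥ := fun h0 ↦ h (Submodule.finrank_eq_zero.2 h0)
  obtain ⟨_, ⟨w, rfl⟩, hw⟩ := Submodule.exists_mem_ne_zero_of_ne_bot hrange
  exact ⟨_, hw, fun k ↦ LinearMap.congr_fun (mul_isotypicProjection σ a k) w⟩

lemma map_one_eq_one_of_multiplicity_eq_zero (h : ∀ a ≠ 0, multiplicity σ a = 0) :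
    σ (ofAdd 1) = 1 := by
  have h0 : isotypicProjection σ 0 = 1 := by
    rw [← sum_isotypicProjection σ,
      Finset.sum_eq_single 0 (fun a _ ha ↦ isotypicProjection_eq_zero (h a ha)) (by simp)]
  simpa [h0] using mul_isotypicProjection σ 0 1

lemma natCast_multiplicity (a : ZMod N) : (multiplicity σ a : ℂ) =
    (N : ℂ)⁻¹ * ∑ j, ZMod.stdAddChar (-(a * j)) * LinearMap.trace ℂ V (σ (ofAdd j)) := by
  have htrace : LinearMap.trace ℂ V (isotypicProjection σ a) = multiplicity σ a :=
    (LinearMap.IsIdempotentElem.isProj_range _ (isIdempotentElem_isotypicProjection σ a)).trace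
  rw [← htrace]
  simp [isotypicProjection]

lemma sum_multiplicity : ∑ a, multiplicity σ a = Module.finrank ℂ V := by
  have hsum := congrArg (LinearMap.trace ℂ V) (sum_isotypicProjection σ)
  simp only [map_sum, LinearMap.trace_one, fun a ↦ (LinearMap.IsIdempotentElem.isProj_range _
    (isIdempotentElem_isotypicProjection σ a)).trace] at hsum
  exact_mod_cast hsum

lemma multiplicity_neg (hreal : ∀ g, star (LinearMap.trace ℂ V (σ g)) = LinearMap.trace ℂ V (σ g))
    (a : ZMod N) : multiplicity σ (-a) = multiplicity σ a := by
  have hstar : star (multiplicity σ a : ℂ) = multiplicity σ (-a) := by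
    rw [natCast_multiplicity, natCast_multiplicity]
    simp only [star_mul', star_sum, hreal, star_inv₀, star_natCast]
    congr! 3 with j
    rw [neg_mul, neg_neg, AddChar.map_neg_eq_conj, starRingEnd_apply, star_star]
  rw [star_natCast] at hstar
  exact_mod_cast hstar.symm

lemma multiplicity_eq_mul {σ' : Representation ℂ (Multiplicative (ZMod N)) W} (c : (ZMod N)ˣ)
    (h : ∀ j, LinearMap.trace ℂ W (σ' (ofAdd (c * j))) = LinearMap.trace ℂ V (σ (ofAdd j)))
    (a : ZMod N) : multiplicity σ' a = multiplicity σ (a * c) := by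
  suffices hcast : (multiplicity σ' a : ℂ) = multiplicity σ (a * c) by exact_mod_cast hcast
  rw [natCast_multiplicity, natCast_multiplicity, ← Equiv.sum_comp (Units.mulLeft c)]
  simp only [Units.mulLeft_apply, h, mul_assoc]

end Isotypic

/-! ### Isotropy representations -/

section Isotropy

open Filter Topology TensorProduct
open Multiplicative (ofAdd)

section Generator

variable {α : Type*} {p : ℕ} {τ : Multiplicative (ZMod p) →* Equiv.Perm α}

lemma apply_eq_self_of_mem_fixedPoints [NeZero p] {x : α}
    (hx : x ∈ Function.fixedPoints (τ (ofAdd 1))) (g : Multiplicative (ZMod p)) : τ g x = x := by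
  have hg : g = ofAdd (1 : ZMod p) ^ g.toAdd.val := by
    rw [← ofAdd_nsmul, nsmul_one, ZMod.natCast_zmod_val, ofAdd_toAdd]
  rw [hg, map_pow, Equiv.Perm.coe_pow]
  exact Function.iterate_fixed hx _

lemma iterate_map_ofAdd_one : (τ (ofAdd 1))^[p] = id := by
  rw [← Equiv.Perm.coe_pow, ← map_pow, ← ofAdd_nsmul, nsmul_one, ZMod.natCast_self, ofAdd_zero,
    map_one, Equiv.Perm.coe_one]

lemma apply_mem_fixedPoints_of_mul_eq [NeZero p] {x : α}
    (hx : x ∈ Function.fixedPoints (τ (ofAdd 1))) {g : Equiv.Perm α} {c : (ZMod p)ˣ}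
    (hg : ∀ j, g * τ (ofAdd j) = τ (ofAdd (c * j)) * g) :
    g x ∈ Function.fixedPoints (τ (ofAdd 1)) := by
  have hgen := hg (c⁻¹ : (ZMod p)ˣ)
  rw [Units.mul_inv] at hgen
  rw [Function.mem_fixedPoints, Function.IsFixedPt, ← Equiv.Perm.mul_apply, ← hgen,
    Equiv.Perm.mul_apply, apply_eq_self_of_mem_fixedPoints hx]

end Generator

variable {E : Type*} [NormedAddCommGroup E] [NormedSpace ℝ E]

section LocalRigidity

variable {t : E → E} {x : E}

/-- Averaging over the orbit: the sum `y ↦ y + t y + ⋯ + t^[p - 1] y` is `t`-invariant and its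
derivative at `x` is multiplication by `p`, so it is injective near `x`. -/
lemma eventually_apply_eq_self_of_hasFDerivAt_id [CompleteSpace E] {p : ℕ} (hp : p ≠ 0)
    (htp : t^[p] = id) (ht : ContDiff ℝ 1 t) (hx : t x = x)
    (hd : HasFDerivAt t (ContinuousLinearMap.id ℝ E) x) :
    ∀ᶠ y in 𝓝 x, t y = y := by
  have hsum_inv (y : E) : birkhoffSum t id p (t y) = birkhoffSum t id p y := by
    rw [← sub_eq_zero, birkhoffSum_apply_sub_birkhoffSum, htp, id_eq, sub_self]
  have hiter (j : ℕ) : ContDiff ℝ 1 t^[j] := by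
    induction j with
    | zero => exact contDiff_id
    | succ j ih => rw [Function.iterate_succ']; exact ht.comp ih
  have hiter_deriv (j : ℕ) : HasFDerivAt t^[j] (1 : E →L[ℝ] E) x := by
    simpa using (show HasFDerivAt t (1 : E →L[ℝ] E) x from hd).iterate hx j
  let L : E ≃L[ℝ] E := ContinuousLinearEquiv.smulLeft (Units.mk0 (p : ℝ) (Nat.cast_ne_zero.2 hp))
  have hsum_deriv : HasFDerivAt (birkhoffSum t id p) (L : E →L[ℝ] E) x := by
    convert! HasFDerivAt.fun_sum (u := Finset.range p) fun j _ ↦ hiter_deriv j using 1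
    ext v
    simp [L, Nat.cast_smul_eq_nsmul]
  have hstrict := (ContDiff.sum fun j _ ↦ hiter j :
    ContDiff ℝ 1 (birkhoffSum t id p)).contDiffAt.hasStrictFDerivAt' hsum_deriv one_ne_zero
  let e := hstrict.toOpenPartialHomeomorph (birkhoffSum t id p)
  have hsource : e.source ∈ 𝓝 x :=
    e.open_source.mem_nhds hstrict.mem_toOpenPartialHomeomorph_source
  have htsource : ∀ᶠ y in 𝓝 x, t y ∈ e.source :=
    ht.continuous.continuousAt.eventually_mem (by rwa [hx])
  filter_upwards [hsource, htsource] with y hy hty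
  exact e.injOn hty hy (hsum_inv y)

lemma eventually_apply_ne_self_of_hasFDerivAt [FiniteDimensional ℝ E] {t' : E →L[ℝ] E}
    (ht : HasFDerivAt t t' x) (hker : ∀ v, t' v = v → v = 0) : ∀ᶠ y in 𝓝[≠] x, t y ≠ y := by
  have hinj : Function.Injective (t' - ContinuousLinearMap.id ℝ E) :=
    (injective_iff_map_eq_zero _).2 fun v hv ↦ hker v (by simpa [sub_eq_zero] using hv)
  obtain ⟨K, -, hK⟩ := (t' - ContinuousLinearMap.id ℝ E).toLinearMap.exists_antilipschitzWith
    (LinearMap.ker_eq_bot.2 hinj)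
  filter_upwards [(ht.sub (hasFDerivAt_id x)).eventually_ne (c := 0) ⟨K, hK⟩] with y hy h
  exact hy (by simp [h])

end LocalRigidity

section Representation

variable {Γ : Type*} [Group Γ]

/-- The complexified isotropy representation of a `C¹` action at a common fixed point. -/
noncomputable def isotropyRep (τ : Γ →* Equiv.Perm E) (hτ : ∀ g, ContDiff ℝ 1 (τ g)) {x : E}
    (hx : ∀ g, τ g x = x) : Representation ℂ Γ (ℂ ⊗[ℝ] E) where
  toFun g := (fderiv ℝ (τ g) x : E →ₗ[ℝ] E).baseChange ℂ
  map_one' := by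
    rw [map_one, Equiv.Perm.coe_one, fderiv_id, ContinuousLinearMap.coe_id]
    exact LinearMap.baseChange_id
  map_mul' g h := by
    rw [map_mul, Equiv.Perm.coe_mul, fderiv_comp x ((hτ g).differentiable one_ne_zero _)
      ((hτ h).differentiable one_ne_zero x), hx]
    exact LinearMap.baseChange_mul _ _

variable {τ : Γ →* Equiv.Perm E} {hτ : ∀ g, ContDiff ℝ 1 (τ g)} {x : E} {hx : ∀ g, τ g x = x}

lemma isotropyRep_apply_one_tmul (g : Γ) (v : E) :
    isotropyRep τ hτ hx g (1 ⊗ₜ v) = 1 ⊗ₜ fderiv ℝ (τ g) x v :=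
  LinearMap.baseChange_tmul _ _ _

lemma fderiv_apply_eq_self_of_isotropyRep {g : Γ} {v : E}
    (h : isotropyRep τ hτ hx g (1 ⊗ₜ v) = 1 ⊗ₜ v) : fderiv ℝ (τ g) x v = v :=
  Module.FaithfullyFlat.tensorProduct_mk_injective (A := ℝ) (B := ℂ) E
    ((isotropyRep_apply_one_tmul g v).symm.trans h)

variable [FiniteDimensional ℝ E]

lemma trace_isotropyRep (g : Γ) : LinearMap.trace ℂ (ℂ ⊗[ℝ] E) (isotropyRep τ hτ hx g) =
    (LinearMap.trace ℝ E (fderiv ℝ (τ g) x : E →ₗ[ℝ] E) : ℝ) :=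
  LinearMap.trace_baseChange _ _

lemma det_isotropyRep (g : Γ) : LinearMap.det (isotropyRep τ hτ hx g) =
    (LinearMap.det (fderiv ℝ (τ g) x : E →ₗ[ℝ] E) : ℝ) :=
  LinearMap.det_baseChange _

end Representation

lemma trace_fderiv_conj [FiniteDimensional ℝ E] {f : E → E} {g : Equiv.Perm E} {x : E}
    (hf : DifferentiableAt ℝ f x) (hx : f x = x) (hg : DifferentiableAt ℝ g x)
    (hg' : DifferentiableAt ℝ g.symm (g x)) :
    LinearMap.trace ℝ E (fderiv ℝ (g ∘ f ∘ g.symm) (g x) : E →ₗ[ℝ] E) =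
      LinearMap.trace ℝ E (fderiv ℝ f x : E →ₗ[ℝ] E) := by
  have hgx : g.symm (g x) = x := g.symm_apply_apply x
  have hinv : fderiv ℝ g.symm (g x) * fderiv ℝ g x = 1 := by
    rw [ContinuousLinearMap.mul_def, ← fderiv_comp x hg' hg, Equiv.symm_comp_self, fderiv_id]
    rfl
  have hcomp : fderiv ℝ (g ∘ f ∘ g.symm) (g x) =
      fderiv ℝ g x * (fderiv ℝ f x * fderiv ℝ g.symm (g x)) := by
    rw [fderiv_comp _ (by simpa [hgx, hx] using hg)
      (by rw [← hgx] at hf; exact hf.comp _ hg'), fderiv_comp _ (by rwa [hgx]) hg']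
    simp [hgx, hx, ContinuousLinearMap.mul_def]
  rw [hcomp, ContinuousLinearMap.toLinearMap_mul, LinearMap.trace_mul_comm,
    ← ContinuousLinearMap.toLinearMap_mul, mul_assoc, hinv, mul_one]

section PrimeOrder

variable {p : ℕ} [Fact p.Prime] [FiniteDimensional ℝ E]
  {τ : Multiplicative (ZMod p) →* Equiv.Perm E} (hp : Odd p) (hτ : ∀ g, ContDiff ℝ 1 (τ g))

include hp in
theorem multiplicity_isotropyRep_const {x y : E} (hx : ∀ g, τ g x = x) (hy : ∀ g, τ g y = y)
    (a : ZMod p) :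
    multiplicity (isotropyRep τ hτ hx) a = multiplicity (isotropyRep τ hτ hy) a := by
  let F : E → ℂ := fun z ↦ (p : ℂ)⁻¹ * ∑ j, ZMod.stdAddChar (-(a * j)) *
    (LinearMap.trace ℝ E (fderiv ℝ (τ (ofAdd j)) z : E →ₗ[ℝ] E) : ℝ)
  have hF (z : E) (hz : ∀ g, τ g z = z) : F z = multiplicity (isotropyRep τ hτ hz) a := by
    simp only [F, natCast_multiplicity, trace_isotropyRep]
  have htrace (j : ZMod p) :
      Continuous fun z ↦ LinearMap.trace ℝ E (fderiv ℝ (τ (ofAdd j)) z : E →ₗ[ℝ] E) :=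
    (LinearMap.trace ℝ E ∘ₗ ContinuousLinearMap.coeLM ℝ).continuous_of_finiteDimensional.comp
      ((hτ (ofAdd j)).continuous_fderiv one_ne_zero)
  have hcont : Continuous fun z ↦ (F z).re := by
    fun_prop
  have hdiscrete : IsDiscrete (Set.range (Nat.cast : ℕ → ℝ)) :=
    isDiscrete_iff_discreteTopology.2
      Nat.isClosedEmbedding_coe_real.isEmbedding.toHomeomorph.symm.isEmbedding.discreteTopology
  have hconn : IsConnected (Function.fixedPoints (τ (ofAdd 1))) :=
    isConnected_fixedPoints hp (hτ _).continuous iterate_map_ofAdd_one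
  have hre := hconn.isPreconnected.constant_of_mapsTo hdiscrete hcont.continuousOn
    (fun z hz ↦ ⟨_, (congrArg Complex.re (hF z (apply_eq_self_of_mem_fixedPoints hz))).symm⟩)
    (hx (ofAdd 1)) (hy (ofAdd 1))
  simpa [hF x hx, hF y hy] using hre

include hp in
lemma multiplicity_isotropyRep_mul {x : E} (hx : ∀ g, τ g x = x) {g : Equiv.Perm E}
    (hg : Differentiable ℝ g) (hg' : Differentiable ℝ g.symm) {c : (ZMod p)ˣ}
    (hgτ : ∀ j, g * τ (ofAdd j) = τ (ofAdd (c * j)) * g) (a : ZMod p) :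
    multiplicity (isotropyRep τ hτ hx) (a * c) = multiplicity (isotropyRep τ hτ hx) a := by
  have hconj (j : ZMod p) : (τ (ofAdd (c * j)) : E → E) = g ∘ τ (ofAdd j) ∘ g.symm := by
    rw [eq_mul_inv_of_mul_eq (hgτ j).symm]
    rfl
  have hgx : ∀ h, τ h (g x) = g x :=
    apply_eq_self_of_mem_fixedPoints (apply_mem_fixedPoints_of_mul_eq (hx _) hgτ)
  rw [multiplicity_isotropyRep_const hp hτ hx hgx a]
  refine (multiplicity_eq_mul c (fun j ↦ ?_) a).symm
  rw [trace_isotropyRep, trace_isotropyRep, hconj,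
    trace_fderiv_conj ((hτ _).differentiable one_ne_zero x) (hx _) (hg x) (hg' _)]

include hp in
lemma exists_multiplicity_isotropyRep_ne_zero {x : E} (hx : ∀ g, τ g x = x)
    (hne : τ (ofAdd 1) ≠ 1) : ∃ a ≠ 0, multiplicity (isotropyRep τ hτ hx) a ≠ 0 := by
  by_contra! hcon
  have hopen : IsOpen (Function.fixedPoints (τ (ofAdd 1))) := by
    refine isOpen_iff_mem_nhds.2 fun y hy ↦ ?_
    have hy' := apply_eq_self_of_mem_fixedPoints hy
    have hrep : isotropyRep τ hτ hy' (ofAdd 1) = 1 := map_one_eq_one_of_multiplicity_eq_zero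
      fun a ha ↦ by rw [multiplicity_isotropyRep_const hp hτ hy' hx, hcon a ha]
    have hd : fderiv ℝ (τ (ofAdd 1)) y = ContinuousLinearMap.id ℝ E :=
      ContinuousLinearMap.ext fun v ↦
        fderiv_apply_eq_self_of_isotropyRep (LinearMap.congr_fun hrep _)
    exact eventually_apply_eq_self_of_hasFDerivAt_id (NeZero.ne p) iterate_map_ofAdd_one (hτ _) hy
      (hd ▸ ((hτ _).differentiable one_ne_zero y).hasFDerivAt)
  have huniv : Function.fixedPoints (τ (ofAdd 1)) = Set.univ :=
    IsClopen.eq_univ ⟨isClosed_fixedPoints (hτ _).continuous, hopen⟩ ⟨x, hx _⟩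
  exact hne (Equiv.ext fun y ↦ (huniv ▸ Set.mem_univ y : y ∈ Function.fixedPoints (τ (ofAdd 1))))

include hp in
lemma fixedPoints_subsingleton_of_multiplicity_eq_zero {x : E} (hx : ∀ g, τ g x = x)
    (h0 : multiplicity (isotropyRep τ hτ hx) 0 = 0) :
    (Function.fixedPoints (τ (ofAdd 1))).Subsingleton := by
  have hconn : IsConnected (Function.fixedPoints (τ (ofAdd 1))) :=
    isConnected_fixedPoints hp (hτ _).continuous iterate_map_ofAdd_one
  rw [← hconn.isPreconnected.isDiscrete_iff_subsingleton, isDiscrete_iff_discreteTopology,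
    discreteTopology_subtype_iff]
  intro y hy
  have hy' := apply_eq_self_of_mem_fixedPoints hy
  have hproj : isotypicProjection (isotropyRep τ hτ hy') 0 = 0 :=
    isotypicProjection_eq_zero (by rw [multiplicity_isotropyRep_const hp hτ hy' hx, h0])
  have hker (v : E) (hv : fderiv ℝ (τ (ofAdd 1)) y v = v) : v = 0 := by
    have hfix := isotypicProjection_zero_apply (σ := isotropyRep τ hτ hy')
      ((isotropyRep_apply_one_tmul (ofAdd 1) v).trans (by rw [hv]))
    rw [hproj] at hfix
    exact Module.FaithfullyFlat.tensorProduct_mk_injective (A := ℝ) (B := ℂ) E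
      (by simpa using hfix.symm)
  rw [← Filter.empty_mem_iff_bot, Filter.mem_inf_principal]
  exact eventually_apply_ne_self_of_hasFDerivAt
    ((hτ _).differentiable one_ne_zero y).hasFDerivAt hker

end PrimeOrder

end Isotropy

section CyclicDet

open Module (Basis)

lemma det_eq_sign_of_apply_basis {R V ι : Type*} [CommRing R] [AddCommGroup V] [Module R V]
    [Fintype ι] [DecidableEq ι] (b : Basis ι R V) {B : Module.End R V} {σ : Equiv.Perm ι}
    (h : ∀ i, B (b i) = b (σ i)) : LinearMap.det B = Equiv.Perm.sign σ := by
  have hmatrix : LinearMap.toMatrix b b B = σ⁻¹.permMatrix R := by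
    ext i j
    simp [LinearMap.toMatrix_apply, h, Finsupp.single_apply, Equiv.Perm.permMatrix,
      PEquiv.toMatrix_apply, Equiv.symm_apply_eq, eq_comm (a := σ j)]
  rw [← LinearMap.det_toMatrix b, hmatrix, Matrix.det_permutation, Equiv.Perm.sign_inv]

lemma det_eq_neg_one_pow_of_pow_apply_eigenvector {K V : Type*} [Field K] [AddCommGroup V]
    [Module K V] {m : ℕ} (hV : Module.finrank K V = m + 1) {B M : Module.End K V} {v : V}
    (hv : v ≠ 0) {μ : Fin (m + 1) → K} (hμ : Function.Injective μ)
    (hM : ∀ i : Fin (m + 1), M ((B ^ (i : ℕ)) v) = μ i • (B ^ (i : ℕ)) v)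
    (hB : (B ^ (m + 1)) v = v) : LinearMap.det B = (-1) ^ m := by
  have hne (i : Fin (m + 1)) : (B ^ (i : ℕ)) v ≠ 0 := fun h0 ↦ hv <| by
    rw [← hB, ← Nat.sub_add_cancel i.2.le, pow_add, Module.End.mul_apply, h0, map_zero]
  have hindep : LinearIndependent K fun i : Fin (m + 1) ↦ (B ^ (i : ℕ)) v :=
    Module.End.eigenvectors_linearIndependent' M μ hμ _ fun i ↦
      ⟨Module.End.mem_eigenspace_iff.2 (hM i), hne i⟩
  let b := basisOfLinearIndependentOfCardEqFinrank hindep (by rw [hV, Fintype.card_fin])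
  have hb (i : Fin (m + 1)) : B (b i) = b (finRotate (m + 1) i) := by
    simp only [b, coe_basisOfLinearIndependentOfCardEqFinrank, ← Module.End.mul_apply, ← pow_succ']
    rcases eq_or_ne i (Fin.last m) with rfl | hi
    · simp [hB]
    · rw [coe_finRotate_of_ne_last hi]
  rw [det_eq_sign_of_apply_basis b hb, sign_finRotate]
  simp

end CyclicDet

/-! ### Semidirect products -/

section Counting

variable {p : ℕ} [Fact p.Prime] {m : ZMod p → ℕ} {Q : Type*} [Fintype Q] {a : ZMod p}

lemma card_add_apply_zero_le_sum {u : Q → (ZMod p)ˣ} (hu : Function.Injective u)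
    (hinv : ∀ g, m (a * u g) = m a) (ha : a ≠ 0) (hma : m a ≠ 0) :
    Fintype.card Q + m 0 ≤ ∑ b, m b := by
  let orbit : Q ↪ ZMod p :=
    ⟨fun g ↦ a * u g, fun g h hgh ↦ hu (Units.ext (mul_left_cancel₀ ha hgh))⟩
  have hzero : (0 : ZMod p) ∉ Finset.univ.map orbit := by
    rintro h
    obtain ⟨g, -, hg⟩ := Finset.mem_map.1 h
    exact (mul_ne_zero ha (u g).ne_zero) hg
  calc Fintype.card Q + m 0 ≤ m 0 + ∑ b ∈ Finset.univ.map orbit, m b := by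
        rw [Finset.sum_map, add_comm]
        gcongr
        rw [← Finset.card_univ, Finset.card_eq_sum_ones]
        exact Finset.sum_le_sum fun g _ ↦ (Nat.one_le_iff_ne_zero.2 hma).trans_eq (hinv g).symm
    _ = ∑ b ∈ insert 0 (Finset.univ.map orbit), m b := (Finset.sum_insert hzero).symm
    _ ≤ ∑ b, m b := Finset.sum_le_sum_of_subset (Finset.subset_univ _)

lemma two_mul_card_le_sum [Group Q] {u : Q →* (ZMod p)ˣ} (hu : Function.Injective u)
    (hp : Odd p) (hQ : Odd (Fintype.card Q)) (hneg : ∀ b, m (-b) = m b)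
    (hinv : ∀ g, m (a * u g) = m a) (ha : a ≠ 0) (hma : m a ≠ 0) :
    2 * Fintype.card Q ≤ ∑ b, m b := by
  have hneg_one : (-1 : (ZMod p)ˣ) ≠ 1 := fun h ↦ (isUnit_two_of_odd hp).ne_zero <| by
    have hval : (-1 : ZMod p) = 1 := congrArg Units.val h
    linear_combination -hval
  have hu_neg (g : Q) : u g ≠ -1 := fun hg ↦ hneg_one <| by
    rw [← hQ.neg_one_pow, ← hg, ← map_pow, pow_card_eq_one, map_one]
  let signed : Q × ℤˣ → (ZMod p)ˣ := fun k ↦ Units.map (Int.castRingHom (ZMod p)) k.2 * u k.1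
  have hsigned : Function.Injective signed := by
    rintro ⟨g, s⟩ ⟨h, s'⟩ hgh
    have hinv_neg {g h : Q} : u g ≠ -u h := fun e ↦
      hu_neg (g * h⁻¹) (by rw [map_mul, e, map_inv]; simp)
    rcases Int.units_eq_one_or s with rfl | rfl <;> rcases Int.units_eq_one_or s' with rfl | rfl
    · simpa [signed, hu.eq_iff] using hgh
    · exact absurd (by simpa [signed] using hgh) (hinv_neg (g := g) (h := h))
    · exact absurd (by simpa [signed] using hgh.symm) (hinv_neg (g := h) (h := g))
    · simpa [signed, hu.eq_iff] using hgh
  have hsigned_inv (k : Q × ℤˣ) : m (a * signed k) = m a := by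
    obtain ⟨g, s⟩ := k
    rcases Int.units_eq_one_or s with rfl | rfl <;> simp [signed, hneg, hinv]
  have hcount := card_add_apply_zero_le_sum hsigned hsigned_inv ha hma
  rw [Fintype.card_prod, Fintype.card_units_int] at hcount
  lia

end Counting

section Semidirect

open TensorProduct
open Multiplicative (ofAdd)
open SemidirectProduct (inl inr)

/-- Every automorphism of the cyclic group of order `p`, written multiplicatively, is
multiplication by a unit of `ZMod p`. -/
def mulAutEquivUnits (p : ℕ) : MulAut (Multiplicative (ZMod p)) ≃* (ZMod p)ˣ :=
  (MulAutMultiplicative (ZMod p)).trans (ZMod.AddAutEquivUnits p).toMultiplicative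

lemma mulAut_apply_ofAdd {p : ℕ} (f : MulAut (Multiplicative (ZMod p))) (j : ZMod p) :
    f (ofAdd j) = ofAdd (mulAutEquivUnits p f * j) := by
  obtain ⟨u, rfl⟩ := (mulAutEquivUnits p).symm.surjective f
  rw [MulEquiv.apply_symm_apply]
  rfl

lemma inr_mul_inl_ofAdd {p : ℕ} {Q : Type*} [Group Q] {φ : Q →* MulAut (Multiplicative (ZMod p))}
    (g : Q) (j : ZMod p) : (inr g * inl (ofAdd j) : Multiplicative (ZMod p) ⋊[φ] Q) =
      inl (ofAdd (mulAutEquivUnits p (φ g) * j)) * inr g := by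
  rw [← mulAut_apply_ofAdd, SemidirectProduct.inl_aut, map_inv, inv_mul_cancel_right]

section Representation

variable {p m : ℕ} [NeZero p] {V : Type*} [AddCommGroup V] [Module ℂ V] [FiniteDimensional ℂ V]
  {φ : Multiplicative (ZMod (m + 1)) →* MulAut (Multiplicative (ZMod p))}

/-- An eigenvector for the normal subgroup has linearly independent translates under the powers of
the generator of the quotient, so that generator permutes a basis cyclically. -/
lemma det_inr_one_of_multiplicity_ne_zero (hφ : Function.Injective φ)
    {σ : Representation ℂ (Multiplicative (ZMod p) ⋊[φ] Multiplicative (ZMod (m + 1))) V}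
    (hV : Module.finrank ℂ V = m + 1) {a : ZMod p} (ha : IsUnit a)
    (hσ : multiplicity (σ.comp inl) a ≠ 0) :
    LinearMap.det (σ (inr (ofAdd 1))) = (-1) ^ m := by
  let u (i : ℕ) : (ZMod p)ˣ := mulAutEquivUnits p (φ (ofAdd (i : ZMod (m + 1))))
  obtain ⟨v, hv, hev⟩ := exists_eigenvector_of_multiplicity_ne_zero hσ
  have hpow (i : ℕ) : σ (inr (ofAdd 1)) ^ i = σ (inr (ofAdd (i : ZMod (m + 1)))) := by
    rw [← map_pow, ← map_pow, ← ofAdd_nsmul, nsmul_one]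
  have hM (i : ℕ) : σ (inl (ofAdd 1)) ((σ (inr (ofAdd 1)) ^ i) v) =
      (ZMod.stdAddChar (a * (↑(u i)⁻¹ : ZMod p)) : ℂ) • (σ (inr (ofAdd 1)) ^ i) v := by
    have hcomm := inr_mul_inl_ofAdd (φ := φ) (ofAdd (i : ZMod (m + 1))) (↑(u i)⁻¹ : ZMod p)
    rw [Units.mul_inv] at hcomm
    rw [hpow, ← Module.End.mul_apply, ← map_mul, ← hcomm, map_mul, Module.End.mul_apply,
      ← map_smul]
    exact congrArg _ (hev _)
  have hμ : Function.Injective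
      fun i : Fin (m + 1) ↦ (ZMod.stdAddChar (a * (↑(u i)⁻¹ : ZMod p)) : ℂ) := fun i k hik ↦ by
    have hu : u i = u k :=
      inv_injective (Units.ext (ha.mul_left_cancel (ZMod.injective_stdAddChar hik)))
    have hcast := Multiplicative.ofAdd.injective (hφ ((mulAutEquivUnits p).injective hu))
    exact Fin.ext (Nat.ModEq.eq_of_lt_of_lt ((ZMod.natCast_eq_natCast_iff _ _ _).1 hcast) i.2 k.2)
  refine det_eq_neg_one_pow_of_pow_apply_eigenvector hV hv hμ (fun i ↦ hM i) ?_
  rw [hpow, ZMod.natCast_self, ofAdd_zero, map_one, map_one, Module.End.one_apply]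

end Representation

section Action

variable {p : ℕ} {Q : Type*} [Group Q] {φ : Q →* MulAut (Multiplicative (ZMod p))}

lemma map_inr_mul_comp_inl {H : Type*} [Group H] (ρ : (Multiplicative (ZMod p) ⋊[φ] Q) →* H)
    (g : Q) (j : ZMod p) : ρ (inr g) * ρ.comp inl (ofAdd j) =
      ρ.comp inl (ofAdd (mulAutEquivUnits p (φ g) * j)) * ρ (inr g) := by
  simp only [MonoidHom.comp_apply, ← map_mul, inr_mul_inl_ofAdd]

lemma apply_eq_self_of_fixedPoints_subsingleton [NeZero p] {α : Type*}
    {ρ : (Multiplicative (ZMod p) ⋊[φ] Q) →* Equiv.Perm α} {x : α}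
    (hx : x ∈ Function.fixedPoints (ρ.comp inl (ofAdd 1)))
    (hsub : (Function.fixedPoints (ρ.comp inl (ofAdd 1))).Subsingleton)
    (g : Multiplicative (ZMod p) ⋊[φ] Q) : ρ g x = x := by
  have hinr : ρ (inr g.right) x = x :=
    hsub (apply_mem_fixedPoints_of_mul_eq hx (map_inr_mul_comp_inl ρ g.right)) hx
  rw [← SemidirectProduct.inl_left_mul_inr_right g, map_mul, Equiv.Perm.mul_apply, hinr]
  exact apply_eq_self_of_mem_fixedPoints hx g.left

variable [Fact p.Prime]
  {E : Type*} [NormedAddCommGroup E] [NormedSpace ℝ E] [FiniteDimensional ℝ E]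

/-- The complexified isotropy representation of the normal subgroup `ZMod p` of a semidirect
product acting by `C¹` diffeomorphisms. -/
noncomputable abbrev isotropyRepInl {ρ : (Multiplicative (ZMod p) ⋊[φ] Q) →* Equiv.Perm E}
    (hρ : ∀ g, ContDiff ℝ 1 (ρ g)) {x : E} (hx : ∀ h, ρ.comp inl h x = x) :
    Representation ℂ (Multiplicative (ZMod p)) (ℂ ⊗[ℝ] E) :=
  isotropyRep (ρ.comp inl) (fun h ↦ hρ (inl h)) hx

variable {ρ : (Multiplicative (ZMod p) ⋊[φ] Q) →* Equiv.Perm E} (hp : Odd p)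
  (hρ : ∀ g, ContDiff ℝ 1 (ρ g)) {x : E} (hx : ∀ h, ρ.comp inl h x = x)

include hp in
lemma multiplicity_isotropyRepInl_mul (g : Q) (a : ZMod p) :
    multiplicity (isotropyRepInl hρ hx) (a * mulAutEquivUnits p (φ g)) =
      multiplicity (isotropyRepInl hρ hx) a := by
  refine multiplicity_isotropyRep_mul hp _ hx ((hρ (inr g)).differentiable one_ne_zero) ?_
    (map_inr_mul_comp_inl ρ g) a
  rw [← Equiv.Perm.inv_def, ← map_inv]
  exact (hρ (inr g)⁻¹).differentiable one_ne_zero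

include hp in
theorem card_add_multiplicity_zero_le_finrank [Fintype Q] (hφ : Function.Injective φ) {a : ZMod p}
    (ha : a ≠ 0) (hma : multiplicity (isotropyRepInl hρ hx) a ≠ 0) :
    Fintype.card Q + multiplicity (isotropyRepInl hρ hx) 0 ≤ Module.finrank ℝ E := by
  rw [← Module.finrank_baseChange (R := ℂ), ← sum_multiplicity (σ := isotropyRepInl hρ hx)]
  exact card_add_apply_zero_le_sum ((mulAutEquivUnits p).injective.comp hφ)
    (fun g ↦ multiplicity_isotropyRepInl_mul hp hρ hx g a) ha hma

include hp in
theorem two_mul_card_le_finrank [Fintype Q] (hQ : Odd (Fintype.card Q))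
    (hφ : Function.Injective φ) {a : ZMod p} (ha : a ≠ 0)
    (hma : multiplicity (isotropyRepInl hρ hx) a ≠ 0) :
    2 * Fintype.card Q ≤ Module.finrank ℝ E := by
  rw [← Module.finrank_baseChange (R := ℂ), ← sum_multiplicity (σ := isotropyRepInl hρ hx)]
  have hreal (h : Multiplicative (ZMod p)) :
      star (LinearMap.trace ℂ (ℂ ⊗[ℝ] E) (isotropyRepInl hρ hx h)) =
        LinearMap.trace ℂ (ℂ ⊗[ℝ] E) (isotropyRepInl hρ hx h) := by
    rw [trace_isotropyRep]
    exact Complex.conj_ofReal _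
  exact two_mul_card_le_sum (u := (mulAutEquivUnits p).toMonoidHom.comp φ)
    ((mulAutEquivUnits p).injective.comp hφ) hp hQ (multiplicity_neg hreal)
    (fun g ↦ multiplicity_isotropyRepInl_mul hp hρ hx g a) ha hma

include hp in
lemma exists_multiplicity_isotropyRepInl_ne_zero (hρ_inj : Function.Injective ρ) :
    ∃ a ≠ 0, multiplicity (isotropyRepInl hρ hx) a ≠ 0 := by
  refine exists_multiplicity_isotropyRep_ne_zero hp _ hx ?_
  rw [Ne, MonoidHom.comp_apply, map_eq_one_iff ρ hρ_inj,
    map_eq_one_iff inl SemidirectProduct.inl_injective, ofAdd_eq_one]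
  exact one_ne_zero

include hp in
theorem det_fderiv_inr_one {m : ℕ}
    {φ : Multiplicative (ZMod (m + 1)) →* MulAut (Multiplicative (ZMod p))}
    (hφ : Function.Injective φ) (hE : Module.finrank ℝ E = m + 1)
    {ρ : (Multiplicative (ZMod p) ⋊[φ] Multiplicative (ZMod (m + 1))) →* Equiv.Perm E}
    (hρ : ∀ g, ContDiff ℝ 1 (ρ g)) {x : E} (hx : ∀ h, ρ.comp inl h x = x)
    (h0 : multiplicity (isotropyRepInl hρ hx) 0 = 0) {a : ZMod p} (ha : a ≠ 0)
    (hma : multiplicity (isotropyRepInl hρ hx) a ≠ 0) :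
    LinearMap.det (fderiv ℝ (ρ (inr (ofAdd 1))) x : E →ₗ[ℝ] E) = (-1) ^ m := by
  have hfix : ∀ g, ρ g x = x := apply_eq_self_of_fixedPoints_subsingleton (hx _)
    (fixedPoints_subsingleton_of_multiplicity_eq_zero hp _ hx h0)
  have hdet := det_inr_one_of_multiplicity_ne_zero hφ (σ := isotropyRep ρ hρ hfix)
    (by rw [Module.finrank_baseChange, hE]) ha.isUnit hma
  rw [det_isotropyRep] at hdet
  exact_mod_cast hdet

end Action

end Semidirect

end SmithTheory

open SemidirectProduct SmithTheory in
theorem minimal_euclidean_action_semidirect_general {E : Type*} [NormedAddCommGroup E]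
    [NormedSpace ℝ E] [FiniteDimensional ℝ E] (p q : ℕ) (hp : p.Prime) (hpodd : Odd p) (hq : 0 < q)
    (φ : Multiplicative (ZMod q) →* MulAut (Multiplicative (ZMod p))) (hφ : Function.Injective φ)
    (ρ : (Multiplicative (ZMod p) ⋊[φ] Multiplicative (ZMod q)) →* Equiv.Perm E)
    (hfaithful : Function.Injective ρ) (hsmooth : ∀ g, ContDiff ℝ 1 (ρ g)) :
    (Odd q → 2 * q ≤ Module.finrank ℝ E) ∧
    (Even q → q ≤ Module.finrank ℝ E) ∧
    (Even q → (∀ g x, 0 < LinearMap.det (fderiv ℝ (ρ g) x : E →ₗ[ℝ] E)) →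
      q + 1 ≤ Module.finrank ℝ E) := by
  have : Fact p.Prime := ⟨hp⟩
  obtain ⟨m, rfl⟩ := Nat.exists_eq_add_one.2 hq
  obtain ⟨x, hx⟩ := (isConnected_fixedPoints hpodd (hsmooth _).continuous
    (iterate_map_ofAdd_one (τ := ρ.comp inl))).nonempty
  have hfix := apply_eq_self_of_mem_fixedPoints (τ := ρ.comp inl) hx
  obtain ⟨a, ha, hma⟩ := exists_multiplicity_isotropyRepInl_ne_zero hpodd hsmooth hfix hfaithful
  have hcard : Fintype.card (Multiplicative (ZMod (m + 1))) = m + 1 := by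
    rw [Fintype.card_multiplicative, ZMod.card]
  have hcount := card_add_multiplicity_zero_le_finrank hpodd hsmooth hfix hφ ha hma
  rw [hcard] at hcount
  refine ⟨fun hodd ↦ ?_, fun _ ↦ by lia, fun heven horient ↦ ?_⟩
  · rw [← hcard] at hodd ⊢
    exact two_mul_card_le_finrank hpodd hsmooth hfix hodd hφ ha hma
  · by_contra! hlt
    have hm : Odd m := Nat.not_even_iff_odd.1 (Nat.even_add_one.1 heven)
    have hdet := horient (inr (Multiplicative.ofAdd 1)) x
    rw [det_fderiv_inr_one hpodd hφ (by lia) hsmooth hfix (by lia) ha hma, hm.neg_one_pow] at hdet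
    norm_num at hdet

/-- Let `p` be an odd prime, `q` a positive integer, and `G = ℤ/p ⋊ ℤ/q` with effective
action of `ℤ/q` on `ℤ/p`.  If `G` acts faithfully by diffeomorphisms on `ℝⁿ`, then:
(a) if `q` is odd, `n ≥ 2q`; (b) if `q` is even, `n ≥ q`; (c) if `q` is even and every
element acts by an orientation-preserving diffeomorphism (positive Jacobian determinant
everywhere), then `n ≥ q + 1`. -/
theorem minimal_euclidean_action_semidirect
    (p q n : ℕ) (hp : p.Prime) (hpodd : Odd p) (hq : 0 < q)
    (φ : Multiplicative (ZMod q) →* MulAut (Multiplicative (ZMod p)))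
    (hφ : Function.Injective φ)
    (ρ : (Multiplicative (ZMod p) ⋊[φ] Multiplicative (ZMod q)) →*
      Equiv.Perm (EuclideanSpace ℝ (Fin n)))
    (hfaithful : Function.Injective ρ)
    (hsmooth : ∀ g, ContDiff ℝ (⊤ : ℕ∞) (ρ g)) :
    (Odd q → 2 * q ≤ n) ∧
    (Even q → q ≤ n) ∧
    (Even q → (∀ g (x : EuclideanSpace ℝ (Fin n)),
        0 < LinearMap.det ((fderiv ℝ (ρ g) x : EuclideanSpace ℝ (Fin n) →L[ℝ]
          EuclideanSpace ℝ (Fin n)) : EuclideanSpace ℝ (Fin n) →ₗ[ℝ]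
          EuclideanSpace ℝ (Fin n))) → q + 1 ≤ n) := by
  simpa only [finrank_euclideanSpace_fin] using
    minimal_euclidean_action_semidirect_general p q hp hpodd hq φ hφ ρ hfaithful
      fun g ↦ (hsmooth g).of_le (by exact_mod_cast le_top)
end
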